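/- arXiv:1208.1225 — 8 statements merged into one kernel-verified Lean document; each statement's English description precedes it below -/
import Mathlib

section
/- Consider the Shannon code of block length n for a first-order Markov source on {1,…,r} whose transition matrix is strictly positive. If at least one of the numbers α_{jk} = log[ p(j|1)·p(j|j) / (p(k|1)·p(j|k)) ], j,k ∈ {1,…,r}, is irrational, then the average redundancy satisfies R_n = 1/2 + o(1), i.e., lim_{n→∞} R_n = 1/2. -/
/-!
STATEMENT 0: Shannon code for a Markov source with strictly positive
transition matrix; if some α_{jk} is irrational then R_n → 1/2.
The alphabet is `Fin (r+2)` (so its size is an arbitrary integer ≥ 2);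
`p j k` is the probability of moving to state `j` from state `k`.
Block length `n+1` (so all block lengths ≥ 1 are covered).
-/

/-- ϱ(u) = ⌈u⌉ − u -/
noncomputable def vrho (u : ℝ) : ℝ := (⌈u⌉ : ℝ) - u

/-- Probability of the string `x` of length `n+1` under the Markov source with
initial probabilities `pinit` and transition probabilities `p j k = p(j|k)`. -/
noncomputable def markovProb {r n : ℕ} (pinit : Fin r → ℝ) (p : Fin r → Fin r → ℝ)
    (x : Fin (n + 1) → Fin r) : ℝ :=
  pinit (x 0) * ∏ t : Fin n, p (x t.succ) (x t.castSucc)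

/-- Average unnormalized redundancy of the Shannon code of block length `n+1`. -/
noncomputable def shannonRed (r n : ℕ) (pinit : Fin r → ℝ) (p : Fin r → Fin r → ℝ) : ℝ :=
  ∑ x : Fin (n + 1) → Fin r,
    markovProb pinit p x * vrho (-Real.logb 2 (markovProb pinit p x))

/-!
Since `ϱ(-log₂ q)` is the fractional part of `log₂ q`, the redundancy is the mean of the fractional
part under the law of `log₂ μ(x) mod 1`. The fractional part is continuous on the circle off one
point, which is null for the uniform law, so by Weyl's criterion it suffices that the Fourier
coefficients `∑ μ(x) e^{2πi m log₂ μ(x)}`, `m ≠ 0`, of these laws tend to zero. The map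
`a ↦ a e^{2πi m log₂ a}` is multiplicative, so such a coefficient is a sum of path weights, governed
by the powers of the twisted transition matrix, whose entries have the transition probabilities as
absolute values. An irrational log-ratio makes two paths of length two with common end points
interfere: their twisted weights point in different directions, so the triangle inequality is
strict in one row of the square of the twisted matrix. As the state of that row is reached from
every state, some power has norm less than one, and the powers decay.
-/

open Filter Topology MeasureTheory
open scoped BoundedContinuousFunction Matrix

section WeakConvergence

variable {Ω Ω' ι : Type*} [MeasurableSpace Ω] [TopologicalSpace Ω] [OpensMeasurableSpace Ω]
  [HasOuterApproxClosed Ω] {L : Filter ι} [L.IsCountablyGenerated]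
  {μs : ι → ProbabilityMeasure Ω} {μ : ProbabilityMeasure Ω}

theorem tendsto_map_of_ae_continuousAt [MeasurableSpace Ω'] [TopologicalSpace Ω'] [BorelSpace Ω']
    {f : Ω → Ω'} (hf : Measurable f) (hcont : ∀ᵐ ω ∂(μ : Measure Ω), ContinuousAt f ω)
    (hμ : Tendsto μs L (𝓝 μ)) :
    Tendsto (fun i => (μs i).map hf.aemeasurable) L (𝓝 (μ.map hf.aemeasurable)) := by
  refine tendsto_of_forall_isOpen_le_liminf' fun G hG => ?_
  simp only [ProbabilityMeasure.toMeasure_map, Measure.map_apply hf hG.measurableSet]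
  calc (μ : Measure Ω) (f ⁻¹' G)
      ≤ (μ : Measure Ω) (interior (f ⁻¹' G)) := by
        refine measure_mono_ae (hcont.mono fun ω hω hωG => ?_)
        exact mem_interior_iff_mem_nhds.2 (hω.preimage_mem_nhds (hG.mem_nhds hωG))
    _ ≤ L.liminf fun i => (μs i : Measure Ω) (interior (f ⁻¹' G)) :=
        ProbabilityMeasure.le_liminf_measure_open_of_tendsto hμ isOpen_interior
    _ ≤ L.liminf fun i => (μs i : Measure Ω) (f ⁻¹' G) :=
        liminf_le_liminf (Eventually.of_forall fun i => measure_mono interior_subset)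

theorem tendsto_integral_of_ae_continuousAt {f : Ω → ℝ} {C : ℝ} (hf : Measurable f)
    (hfC : ∀ ω, |f ω| ≤ C) (hcont : ∀ᵐ ω ∂(μ : Measure Ω), ContinuousAt f ω)
    (hμ : Tendsto μs L (𝓝 μ)) :
    Tendsto (fun i => ∫ ω, f ω ∂(μs i : Measure Ω)) L (𝓝 (∫ ω, f ω ∂(μ : Measure Ω))) := by
  let clamp : ℝ →ᵇ ℝ := .ofNormedAddCommGroup (fun x => max (-C) (min C x)) (by fun_prop) |C|
    fun x => abs_le.2 ⟨(neg_le_neg (le_abs_self C)).trans (le_max_left _ _),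
      max_le (neg_le_abs C) ((min_le_left C x).trans (le_abs_self C))⟩
  have hclamp (ω : Ω) : clamp (f ω) = f ω := by
    change max (-C) (min C (f ω)) = f ω
    rw [min_eq_right (abs_le.1 (hfC ω)).2, max_eq_right (abs_le.1 (hfC ω)).1]
  have hint (ν : ProbabilityMeasure Ω) :
      ∫ x, clamp x ∂(ν.map hf.aemeasurable : Measure ℝ) = ∫ ω, f ω ∂(ν : Measure Ω) := by
    rw [ProbabilityMeasure.toMeasure_map,
      integral_map hf.aemeasurable clamp.continuous.aestronglyMeasurable]
    simp only [hclamp]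
  simpa only [hint] using ProbabilityMeasure.tendsto_iff_forall_integral_tendsto.1
    (tendsto_map_of_ae_continuousAt hf hcont hμ) clamp

end WeakConvergence

section Weyl

variable {T : ℝ} [hT : Fact (0 < T)] {ι : Type*} {L : Filter ι}

theorem integral_fourier_haarAddCircle (m : ℤ) :
    ∫ t : AddCircle T, fourier m t ∂AddCircle.haarAddCircle = if m = 0 then 1 else 0 := by
  have h := congrFun (fourierCoeff_fourier (T := T) m) 0
  simp only [fourierCoeff, neg_zero, fourier_zero, one_smul, Pi.single_apply] at h
  simpa only [eq_comm] using h

theorem tendsto_haarAddCircle_of_tendsto_fourier {μs : ι → ProbabilityMeasure (AddCircle T)}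
    (h : ∀ m : ℤ, m ≠ 0 →
      Tendsto (fun i => ∫ t, fourier m t ∂(μs i : Measure (AddCircle T))) L (𝓝 0)) :
    Tendsto μs L (𝓝 ⟨AddCircle.haarAddCircle, inferInstance⟩) := by
  have hpoly : ∀ g ∈ Submodule.span ℂ (Set.range (@fourier T)),
      Tendsto (fun i => ∫ t, g t ∂(μs i : Measure _)) L
        (𝓝 (∫ t, g t ∂AddCircle.haarAddCircle)) := by
    have hint (g : C(AddCircle T, ℂ)) (ν : Measure (AddCircle T)) [IsFiniteMeasure ν] :
        Integrable g ν :=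
      g.continuous.integrable_of_hasCompactSupport (.of_compactSpace _)
    intro g hg
    induction hg using Submodule.span_induction with
    | mem g hg =>
      obtain ⟨m, rfl⟩ := hg
      rw [integral_fourier_haarAddCircle]
      split_ifs with hm
      · simpa [hm] using tendsto_const_nhds
      · exact h m hm
    | zero => simpa using tendsto_const_nhds
    | add g₁ g₂ _ _ h₁ h₂ =>
      simpa [integral_add (hint g₁ _) (hint g₂ _)] using h₁.add h₂
    | smul c g _ hg => simpa [integral_const_mul] using hg.const_mul c
  refine ProbabilityMeasure.tendsto_of_tight_of_separatesPoints ℂ .of_compactSpace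
    (A := fourierSubalgebra.comap (BoundedContinuousFunction.toContinuousMapStarₐ ℂ)) ?_
    fun g hg => hpoly g ?_
  · intro x y hxy
    obtain ⟨_, ⟨g, hg, rfl⟩, hgxy⟩ := fourierSubalgebra_separatesPoints hxy
    exact ⟨g, ⟨g, ⟨.mkOfCompact g, hg, rfl⟩, rfl⟩, hgxy⟩
  · rw [← fourierSubalgebra_coe]
    exact hg

theorem integral_equivIco_haarAddCircle :
    ∫ t : AddCircle T, (AddCircle.equivIco T 0 t : ℝ) ∂AddCircle.haarAddCircle = T / 2 := by
  have hlift : ∀ x ∈ Set.uIoo 0 (0 + T),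
      (AddCircle.equivIco T 0 (x : AddCircle T) : ℝ) = x := by
    intro x hx
    rw [Set.uIoo_of_le (by simpa using hT.out.le)] at hx
    rw [AddCircle.equivIco_coe_eq ⟨hx.1.le, hx.2⟩]
  rw [AddCircle.integral_haarAddCircle, ← AddCircle.intervalIntegral_preimage T 0,
    intervalIntegral.integral_congr_uIoo hlift, zero_add, integral_id, smul_eq_mul]
  field [hT.out.ne']

theorem tendsto_integral_equivIco_of_tendsto_haarAddCircle [L.IsCountablyGenerated]
    {μs : ι → ProbabilityMeasure (AddCircle T)}
    (hμ : Tendsto μs L (𝓝 ⟨AddCircle.haarAddCircle, inferInstance⟩)) :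
    Tendsto (fun i => ∫ t, (AddCircle.equivIco T 0 t : ℝ) ∂(μs i : Measure _)) L (𝓝 (T / 2)) := by
  have hmeas : Measurable fun t : AddCircle T => (AddCircle.equivIco T 0 t : ℝ) :=
    measurable_subtype_coe.comp (AddCircle.measurableEquivIco T 0).measurable
  have hbound (t : AddCircle T) : |(AddCircle.equivIco T 0 t : ℝ)| ≤ T := by
    obtain ⟨h0, hT⟩ := (AddCircle.equivIco T 0 t).2
    rw [abs_of_nonneg h0]
    simpa using hT.le
  have hcont : ∀ᵐ t ∂(AddCircle.haarAddCircle : Measure (AddCircle T)),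
      ContinuousAt (fun t => (AddCircle.equivIco T 0 t : ℝ)) t := by
    have hzero : AddCircle.haarAddCircle {(0 : AddCircle T)} = 0 := by
      have h := AddCircle.volume_closedBall T (x := 0) 0
      simpa [AddCircle.volume_eq_smul_haarAddCircle, hT.out, hT.out.not_ge] using h
    filter_upwards [compl_mem_ae_iff.2 hzero] with t ht
    exact continuous_subtype_val.continuousAt.comp (AddCircle.continuousAt_equivIco T 0 ht)
  rw [← integral_equivIco_haarAddCircle]
  exact tendsto_integral_of_ae_continuousAt (μ := ⟨AddCircle.haarAddCircle, inferInstance⟩)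
    hmeas hbound hcont hμ

end Weyl

section FiniteLaw

variable {α Ω : Type*} [Fintype α] [MeasurableSpace Ω]

/-- The law of a random variable taking the value `θ i` with probability `w i`, as a sum of point
masses. `ENNReal.ofReal` truncates negative weights to zero. -/
noncomputable def weightedDirac (w : α → ℝ) (θ : α → Ω) : Measure Ω :=
  ∑ i, ENNReal.ofReal (w i) • Measure.dirac (θ i)

theorem isProbabilityMeasure_weightedDirac {w : α → ℝ} (θ : α → Ω) (hw : ∀ i, 0 ≤ w i)
    (hw1 : ∑ i, w i = 1) : IsProbabilityMeasure (weightedDirac w θ) := by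
  constructor
  simp [weightedDirac, ← ENNReal.ofReal_sum_of_nonneg fun i _ => hw i, hw1]

theorem integral_weightedDirac [MeasurableSingletonClass Ω] {E : Type*} [NormedAddCommGroup E]
    [NormedSpace ℝ E] [CompleteSpace E] {w : α → ℝ} (θ : α → Ω) (hw : ∀ i, 0 ≤ w i) (f : Ω → E) :
    ∫ ω, f ω ∂weightedDirac w θ = ∑ i, w i • f (θ i) := by
  rw [weightedDirac, integral_finsetSum_measure fun i _ =>
    (integrable_dirac enorm_lt_top).smul_measure ENNReal.ofReal_ne_top]
  simp only [integral_smul_measure, integral_dirac, ENNReal.toReal_ofReal (hw _)]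

end FiniteLaw

theorem tendsto_sum_mul_fract_of_tendsto_fourier {ι : Type*} {L : Filter ι} [L.IsCountablyGenerated]
    {α : ι → Type*} [∀ i, Fintype (α i)] {w u : ∀ i, α i → ℝ} (hw : ∀ i a, 0 ≤ w i a)
    (hw1 : ∀ i, ∑ a, w i a = 1)
    (h : ∀ m : ℤ, m ≠ 0 →
      Tendsto (fun i => ∑ a, w i a • fourier m (u i a : UnitAddCircle)) L (𝓝 0)) :
    Tendsto (fun i => ∑ a, w i a * Int.fract (u i a)) L (𝓝 (1 / 2)) := by
  let μs (i : ι) : ProbabilityMeasure UnitAddCircle :=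
    ⟨weightedDirac (w i) fun a => (u i a : UnitAddCircle),
      isProbabilityMeasure_weightedDirac _ (hw i) (hw1 i)⟩
  have hμs : Tendsto μs L (𝓝 ⟨AddCircle.haarAddCircle, inferInstance⟩) :=
    tendsto_haarAddCircle_of_tendsto_fourier fun m hm => by
      simpa only [μs, ProbabilityMeasure.coe_mk, integral_weightedDirac _ (hw _)] using h m hm
  simpa only [μs, ProbabilityMeasure.coe_mk, integral_weightedDirac _ (hw _),
    AddCircle.coe_equivIco_mk_apply, div_one, mul_one, smul_eq_mul] using
    tendsto_integral_equivIco_of_tendsto_haarAddCircle hμs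

section MatrixPowers

open scoped Matrix.Norms.Operator

theorem tendsto_pow_of_norm_le_one_of_norm_pow_lt_one {R : Type*} [SeminormedRing R] {a : R}
    {N : ℕ} (ha : ‖a‖ ≤ 1) (haN : ‖a ^ N‖ < 1) : Tendsto (a ^ ·) atTop (𝓝 0) := by
  have hanti : Antitone fun n => ‖a ^ (n + 1)‖ := antitone_nat_of_succ_le fun n => by
    rw [pow_succ]
    exact (norm_mul_le _ _).trans (mul_le_of_le_one_right (norm_nonneg _) ha)
  have hsub : Tendsto (fun q => ‖a ^ (N * q + 1)‖) atTop (𝓝 0) := by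
    simpa [pow_succ, pow_mul] using
      ((tendsto_pow_atTop_nhds_zero_of_norm_lt_one haN).mul_const a).norm
  refine (tendsto_add_atTop_iff_nat 1).1 (tendsto_zero_iff_norm_tendsto_zero.2 ?_)
  refine tendsto_order.2 ⟨fun c hc => .of_forall fun n => hc.trans_le (norm_nonneg _), ?_⟩
  intro c hc
  obtain ⟨q, hq⟩ := (hsub.eventually_lt_const hc).exists
  filter_upwards [eventually_ge_atTop (N * q)] with n hn
  exact (hanti hn).trans_lt hq

variable {m n E : Type*} [Fintype m] [Fintype n] [SeminormedAddCommGroup E]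

theorem linfty_opNorm_le_iff (A : Matrix m n E) {c : ℝ} (hc : 0 ≤ c) :
    ‖A‖ ≤ c ↔ ∀ i, ∑ j, ‖A i j‖ ≤ c := by
  lift c to NNReal using hc
  rw [Matrix.linfty_opNorm_def, NNReal.coe_le_coe, Finset.sup_le_iff]
  simp only [Finset.mem_univ, true_imp_iff, ← NNReal.coe_le_coe, NNReal.coe_sum, coe_nnnorm]

theorem linfty_opNorm_lt_iff (A : Matrix m n E) {c : ℝ} (hc : 0 < c) :
    ‖A‖ < c ↔ ∀ i, ∑ j, ‖A i j‖ < c := by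
  lift c to NNReal using hc.le
  rw [Matrix.linfty_opNorm_def, NNReal.coe_lt_coe, Finset.sup_lt_iff (NNReal.coe_pos.1 hc)]
  simp only [Finset.mem_univ, true_imp_iff, ← NNReal.coe_lt_coe, NNReal.coe_sum, coe_nnnorm]

theorem sum_norm_mul_apply_le {l R : Type*} [NonUnitalSeminormedRing R] (A : Matrix l m R)
    (B : Matrix m n R) (i : l) :
    ∑ j, ‖(A * B) i j‖ ≤ ∑ k, ‖A i k‖ * ∑ j, ‖B k j‖ := by
  simp only [Finset.mul_sum, Matrix.mul_apply]
  rw [Finset.sum_comm]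
  exact Finset.sum_le_sum fun j _ => norm_sum_le_of_le _ fun k _ => norm_mul_le _ _

variable {R : Type*} [DecidableEq n] [SeminormedRing R] [NormOneClass R]
  {A : Matrix n n R} {P : Matrix n n ℝ}

theorem norm_pow_apply_le (hA : ∀ i j, ‖A i j‖ ≤ P i j) (k : ℕ) (i j : n) :
    ‖(A ^ k) i j‖ ≤ (P ^ k) i j := by
  induction k generalizing i j with
  | zero =>
    simp only [pow_zero, Matrix.one_apply]
    split_ifs <;> simp
  | succ k ih =>
    simp only [pow_succ, Matrix.mul_apply]
    exact norm_sum_le_of_le _ fun l _ => (norm_mul_le _ _).trans <|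
      mul_le_mul (ih i l) (hA l j) (norm_nonneg _) ((norm_nonneg _).trans (ih i l))

theorem sum_norm_pow_apply_le_one (hP : P ∈ Matrix.rowStochastic ℝ n)
    (hA : ∀ i j, ‖A i j‖ ≤ P i j) (k : ℕ) (i : n) : ∑ j, ‖(A ^ k) i j‖ ≤ 1 :=
  calc ∑ j, ‖(A ^ k) i j‖ ≤ ∑ j, (P ^ k) i j :=
        Finset.sum_le_sum fun j _ => norm_pow_apply_le hA k i j
    _ = 1 := Matrix.sum_row_of_mem_rowStochastic (pow_mem hP k) i

theorem sum_norm_pow_add_apply_lt_one (hP : P ∈ Matrix.rowStochastic ℝ n)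
    (hA : ∀ i j, ‖A i j‖ ≤ P i j) {i z : n} {k q : ℕ} (hiz : 0 < (P ^ k) i z)
    (hz : ∑ j, ‖(A ^ q) z j‖ < 1) : ∑ j, ‖(A ^ (k + q)) i j‖ < 1 := by
  have hone := sum_norm_pow_apply_le_one hP hA q
  rw [pow_add]
  calc ∑ j, ‖(A ^ k * A ^ q) i j‖ ≤ ∑ l, ‖(A ^ k) i l‖ * ∑ j, ‖(A ^ q) l j‖ :=
        sum_norm_mul_apply_le _ _ i
    _ ≤ ∑ l, (P ^ k) i l * ∑ j, ‖(A ^ q) l j‖ := by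
        gcongr with l
        exact norm_pow_apply_le hA k i l
    _ < ∑ l, (P ^ k) i l := by
        refine Finset.sum_lt_sum (fun l _ => ?_) ⟨z, Finset.mem_univ z, ?_⟩
        · exact mul_le_of_le_one_right
            (Matrix.nonneg_of_mem_rowStochastic (pow_mem hP k)) (hone l)
        · exact mul_lt_of_lt_one_right hiz hz
    _ = 1 := Matrix.sum_row_of_mem_rowStochastic (pow_mem hP k) i

theorem sum_norm_pow_apply_lt_one_of_le (hP : P ∈ Matrix.rowStochastic ℝ n)
    (hA : ∀ i j, ‖A i j‖ ≤ P i j) {i : n} {k q : ℕ} (hkq : k ≤ q)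
    (hi : ∑ j, ‖(A ^ k) i j‖ < 1) : ∑ j, ‖(A ^ q) i j‖ < 1 := by
  obtain ⟨l, rfl⟩ := Nat.exists_eq_add_of_le hkq
  rw [pow_add]
  calc ∑ j, ‖(A ^ k * A ^ l) i j‖ ≤ ∑ z, ‖(A ^ k) i z‖ * ∑ j, ‖(A ^ l) z j‖ :=
        sum_norm_mul_apply_le _ _ i
    _ ≤ ∑ z, ‖(A ^ k) i z‖ := Finset.sum_le_sum fun z _ =>
        mul_le_of_le_one_right (norm_nonneg _) (sum_norm_pow_apply_le_one hP hA l z)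
    _ < 1 := hi

theorem tendsto_pow_of_norm_apply_le_rowStochastic (hP : P ∈ Matrix.rowStochastic ℝ n)
    (hA : ∀ i j, ‖A i j‖ ≤ P i j) {z : n} (hreach : ∀ i, ∃ k, 0 < (P ^ k) i z) {q : ℕ}
    (hz : ∑ j, ‖(A ^ q) z j‖ < 1) : Tendsto (A ^ ·) atTop (𝓝 0) := by
  choose k hk using hreach
  refine tendsto_pow_of_norm_le_one_of_norm_pow_lt_one (N := Finset.univ.sup k + q)
    ((linfty_opNorm_le_iff A zero_le_one).2 fun i => ?_)
    ((linfty_opNorm_lt_iff _ zero_lt_one).2 fun i => ?_)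
  · simpa using sum_norm_pow_apply_le_one hP hA 1 i
  · exact sum_norm_pow_apply_lt_one_of_le hP hA
      (Nat.add_le_add_right (Finset.le_sup (Finset.mem_univ i)) q)
      (sum_norm_pow_add_apply_lt_one hP hA (hk i) hz)

end MatrixPowers

section Paths

variable {S R : Type*}

/-- The weight of a path `x`, where `v` weights its first state and `M i j` each step from `i` to
`j`. It is the probability of `x` under the Markov chain with initial law `v` and row-stochastic
transition matrix `M`. -/
def pathWeight [CommMonoid R] {n : ℕ} (v : S → R) (M : Matrix S S R) (x : Fin (n + 1) → S) : R :=
  v (x 0) * ∏ t : Fin n, M (x t.castSucc) (x t.succ)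

theorem map_pathWeight {R' F : Type*} [CommMonoid R] [CommMonoid R'] [FunLike F R R']
    [MonoidHomClass F R R'] {n : ℕ} (f : F) (v : S → R) (M : Matrix S S R) (x : Fin (n + 1) → S) :
    f (pathWeight v M x) = pathWeight (f ∘ v) (M.map f) x := by
  simp only [pathWeight, map_mul, map_prod, Function.comp_apply, Matrix.map_apply]

theorem pathWeight_nonneg [CommSemiring R] [PartialOrder R] [IsOrderedRing R] {n : ℕ} {v : S → R}
    {M : Matrix S S R} (hv : ∀ i, 0 ≤ v i) (hM : ∀ i j, 0 ≤ M i j) (x : Fin (n + 1) → S) :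
    0 ≤ pathWeight v M x :=
  mul_nonneg (hv _) (Finset.prod_nonneg fun _ _ => hM _ _)

theorem sum_pathWeight [Fintype S] [DecidableEq S] [CommSemiring R] (v : S → R) (M : Matrix S S R)
    (n : ℕ) : ∑ x : Fin (n + 1) → S, pathWeight v M x = v ⬝ᵥ (M ^ n *ᵥ 1) := by
  induction n generalizing v with
  | zero =>
    simpa [pathWeight, dotProduct] using
      Fintype.sum_equiv (Equiv.funUnique (Fin 1) S) (fun x => v (x 0)) v fun _ => rfl
  | succ n ih =>
    have hcons (i : S) (x : Fin (n + 1) → S) :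
        pathWeight v M (Fin.cons i x : Fin (n + 2) → S) = v i * pathWeight (M.row i) M x := by
      simp only [pathWeight, Fin.prod_univ_succ, Fin.castSucc_zero, Fin.cons_zero, Fin.cons_succ,
        ← Fin.succ_castSucc, Matrix.row_apply]
    calc ∑ x : Fin (n + 2) → S, pathWeight v M x
        = ∑ i, ∑ x : Fin (n + 1) → S, v i * pathWeight (M.row i) M x := by
          rw [← (Fin.consEquiv fun _ : Fin (n + 2) => S).sum_comp, Fintype.sum_prod_type]
          exact Finset.sum_congr rfl fun i _ => Finset.sum_congr rfl fun x _ => hcons i x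
      _ = v ⬝ᵥ (M ^ (n + 1) *ᵥ 1) := by
          simp only [← Finset.mul_sum, ih, pow_succ', ← Matrix.mulVec_mulVec]
          rfl

theorem sum_pathWeight_of_mem_rowStochastic [Fintype S] [DecidableEq S] [CommSemiring R]
    [PartialOrder R] [IsOrderedRing R] (v : S → R) {P : Matrix S S R}
    (hP : P ∈ Matrix.rowStochastic R S) (n : ℕ) :
    ∑ x : Fin (n + 1) → S, pathWeight v P x = ∑ i, v i := by
  rw [sum_pathWeight, Matrix.one_vecMul_of_mem_rowStochastic (pow_mem hP n), dotProduct_one]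

theorem tendsto_sum_pathWeight_of_tendsto_pow [Fintype S] [DecidableEq S] [CommSemiring R]
    [TopologicalSpace R] [IsTopologicalSemiring R] (v : S → R) {M : Matrix S S R}
    (hM : Tendsto (M ^ ·) atTop (𝓝 0)) :
    Tendsto (fun n => ∑ x : Fin (n + 1) → S, pathWeight v M x) atTop (𝓝 0) := by
  have hcont : Continuous fun N : Matrix S S R => v ⬝ᵥ (N *ᵥ 1) := by fun_prop
  simpa [sum_pathWeight, Function.comp_def] using (hcont.tendsto 0).comp hM

end Paths

theorem norm_sum_lt_of_not_sameRay {ι E : Type*} [NormedAddCommGroup E] [NormedSpace ℝ E]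
    [StrictConvexSpace ℝ E] {s : Finset ι} {f : ι → E} {i j : ι} (hi : i ∈ s) (hj : j ∈ s)
    (h : ¬ SameRay ℝ (f i) (f j)) : ‖∑ k ∈ s, f k‖ < ∑ k ∈ s, ‖f k‖ := by
  classical
  have hij : i ≠ j := by rintro rfl; exact h .rfl
  have hsub : {i, j} ⊆ s := Finset.insert_subset hi (Finset.singleton_subset_iff.2 hj)
  rw [← Finset.sum_sdiff hsub, ← Finset.sum_sdiff hsub, Finset.sum_pair hij, Finset.sum_pair hij]
  exact (norm_add_le _ _).trans_lt
    (add_lt_add_of_le_of_lt (norm_sum_le _ _) (norm_add_lt_of_not_sameRay h))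

/-- The multiplicative map `a ↦ a e^{2πi m log_b a}`, which turns path weights into the terms of the
`m`-th Fourier coefficient of the law of `log_b a mod 1`. At `a = 0` the factor `a` removes the
junk value of the logarithm. -/
noncomputable def logTwist (b : ℝ) (m : ℤ) : ℝ →*₀ ℂ where
  toFun a := a • fourier m (Real.logb b a : UnitAddCircle)
  map_zero' := zero_smul ℝ _
  map_one' := by simp
  map_mul' x y := by
    rcases eq_or_ne x 0 with rfl | hx
    · simp
    rcases eq_or_ne y 0 with rfl | hy
    · simp
    simp only [Real.logb_mul hx hy, AddCircle.coe_add, fourier_apply, smul_add,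
      AddCircle.toCircle_add, Circle.coe_mul, smul_mul_smul_comm]

theorem logTwist_apply (b : ℝ) (m : ℤ) (a : ℝ) :
    logTwist b m a = a • fourier m (Real.logb b a : UnitAddCircle) :=
  rfl

theorem norm_logTwist (b : ℝ) (m : ℤ) {a : ℝ} (ha : 0 ≤ a) : ‖logTwist b m a‖ = a := by
  rw [logTwist_apply, norm_smul, Real.norm_of_nonneg ha, fourier_apply, Circle.norm_coe, mul_one]

theorem not_sameRay_logTwist {b : ℝ} {m : ℤ} (hm : m ≠ 0) {x y : ℝ} (hx : 0 ≤ x) (hy : 0 ≤ y)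
    (h : Irrational (Real.logb b (x / y))) : ¬ SameRay ℝ (logTwist b m x) (logTwist b m y) := by
  have hx0 : x ≠ 0 := by rintro rfl; simp at h
  have hy0 : y ≠ 0 := by rintro rfl; simp at h
  intro hray
  have hphase : fourier m (Real.logb b y : UnitAddCircle)
      = fourier m (Real.logb b x : UnitAddCircle) := by
    rw [sameRay_iff_norm_smul_eq, norm_logTwist b m hx, norm_logTwist b m hy, logTwist_apply,
      logTwist_apply, smul_smul, smul_smul, mul_comm y] at hray
    exact smul_right_injective ℂ (mul_ne_zero hx0 hy0) hray
  have hangle : m • (Real.logb b y : UnitAddCircle) = m • (Real.logb b x : UnitAddCircle) :=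
    AddCircle.injective_toCircle one_ne_zero (Circle.ext hphase)
  rw [eq_comm, ← sub_eq_zero, ← smul_sub, ← AddCircle.coe_sub, ← Real.logb_div hx0 hy0,
    ← AddCircle.coe_zsmul, AddCircle.coe_eq_zero_iff] at hangle
  obtain ⟨k, hk⟩ := hangle
  exact (h.intCast_mul hm).ne_int k (by simpa using hk.symm)

section Source

variable {S : Type*} [Fintype S] [DecidableEq S] {P : Matrix S S ℝ} {b : ℝ}

theorem sum_norm_sq_map_logTwist_apply_lt_one (hP : P ∈ Matrix.rowStochastic ℝ S) {m : ℤ}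
    (hm : m ≠ 0) {z i j k : S}
    (hirr : Irrational (Real.logb b (P z i * P i k / (P z j * P j k)))) :
    ∑ l, ‖(P.map (logTwist b m) ^ 2) z l‖ < 1 := by
  have hP0 (i j : S) : 0 ≤ P i j := Matrix.nonneg_of_mem_rowStochastic hP
  have hpath (l : S) : 0 ≤ P z l * P l k := mul_nonneg (hP0 _ _) (hP0 _ _)
  have hinterfere : ‖(P.map (logTwist b m) ^ 2) z k‖ < (P ^ 2) z k := by
    simpa only [sq, Matrix.mul_apply, Matrix.map_apply, ← map_mul, norm_logTwist b m (hpath _)]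
      using norm_sum_lt_of_not_sameRay (Finset.mem_univ i) (Finset.mem_univ j)
        (f := fun l => logTwist b m (P z l * P l k))
        (not_sameRay_logTwist hm (hpath i) (hpath j) hirr)
  calc ∑ l, ‖(P.map (logTwist b m) ^ 2) z l‖ < ∑ l, (P ^ 2) z l :=
        Finset.sum_lt_sum
          (fun l _ => norm_pow_apply_le (fun i j => (norm_logTwist b m (hP0 i j)).le) 2 z l)
          ⟨k, Finset.mem_univ k, hinterfere⟩
    _ = 1 := Matrix.sum_row_of_mem_rowStochastic (pow_mem hP 2) z

theorem tendsto_sum_pathWeight_mul_fract_logb (hP : P ∈ Matrix.rowStochastic ℝ S) {v : S → ℝ}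
    (hv : ∀ i, 0 ≤ v i) (hv1 : ∑ i, v i = 1) {z : S} (hz : ∀ i, ∃ n, 0 < (P ^ n) i z)
    (hirr : ∃ i j k, Irrational (Real.logb b (P z i * P i k / (P z j * P j k)))) :
    Tendsto (fun n => ∑ x : Fin (n + 1) → S,
      pathWeight v P x * Int.fract (Real.logb b (pathWeight v P x))) atTop (𝓝 (1 / 2)) := by
  have hP0 (i j : S) : 0 ≤ P i j := Matrix.nonneg_of_mem_rowStochastic hP
  refine tendsto_sum_mul_fract_of_tendsto_fourier (fun n => pathWeight_nonneg hv hP0)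
    (fun n => (sum_pathWeight_of_mem_rowStochastic v hP n).trans hv1) fun m hm => ?_
  obtain ⟨i, j, k, hijk⟩ := hirr
  have hdecay : Tendsto (P.map (logTwist b m) ^ ·) atTop (𝓝 0) :=
    tendsto_pow_of_norm_apply_le_rowStochastic hP (fun i j => (norm_logTwist b m (hP0 i j)).le) hz
      (sum_norm_sq_map_logTwist_apply_lt_one hP hm hijk)
  refine (tendsto_sum_pathWeight_of_tendsto_pow (logTwist b m ∘ v) hdecay).congr fun n => ?_
  exact Finset.sum_congr rfl fun x _ => (map_pathWeight (logTwist b m) v P x).symm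

end Source

theorem vrho_neg (u : ℝ) : vrho (-u) = Int.fract u := by
  rw [vrho, Int.ceil_neg, Int.cast_neg, neg_sub_neg, Int.fract]

theorem shannon_redundancy_irrational_case_general {r : ℕ} {p : Fin r → Fin r → ℝ}
    {pinit : Fin r → ℝ} (hp : ∀ j k, 0 ≤ p j k) (hpsum : ∀ k, ∑ j, p j k = 1)
    (hinit0 : ∀ j, 0 ≤ pinit j) (hinit1 : ∑ j, pinit j = 1) {z : Fin r}
    (hz : ∀ k, ∃ n, 0 < (Matrix.of p ^ n) z k)
    (hirr : ∃ i j k, Irrational (Real.logb 2 (p i z * p k i / (p j z * p k j)))) :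
    Tendsto (fun n => shannonRed r n pinit p) atTop (𝓝 (1 / 2)) := by
  have hP : (Matrix.of p)ᵀ ∈ Matrix.rowStochastic ℝ (Fin r) :=
    Matrix.mem_rowStochastic_iff_sum.2 ⟨fun k j => hp j k, hpsum⟩
  simp only [shannonRed, vrho_neg]
  exact tendsto_sum_pathWeight_mul_fract_logb hP hinit0 hinit1
    (by simpa only [← Matrix.transpose_pow, Matrix.transpose_apply] using hz) hirr

theorem shannon_redundancy_irrational_case (r : ℕ)
    (p : Fin (r + 2) → Fin (r + 2) → ℝ) (pinit : Fin (r + 2) → ℝ)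
    (hppos : ∀ j k, 0 < p j k) (hpsum : ∀ k, ∑ j, p j k = 1)
    (hinit0 : ∀ j, 0 ≤ pinit j) (hinit1 : ∑ j, pinit j = 1)
    (hirr : ∃ j k : Fin (r + 2),
      Irrational (Real.logb 2 (p j 0 * p j j / (p k 0 * p j k)))) :
    Filter.Tendsto (fun n : ℕ => shannonRed (r + 2) n pinit p)
      Filter.atTop (nhds (1 / 2)) := by
  obtain ⟨j, k, hjk⟩ := hirr
  exact shannon_redundancy_irrational_case_general (fun j k => (hppos j k).le) hpsum hinit0 hinit1
    (z := 0) (fun k => ⟨1, by simpa using hppos 0 k⟩) ⟨j, k, j, hjk⟩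
end

section
/- Consider the Shannon code of block length n for a first-order Markov source on {1,…,r} with strictly positive transition matrix and strictly positive initial probabilities, and suppose all the numbers α_{jk} are rational. Let M be the smallest positive integer such that M·α_{jk} ∈ ℤ for all j,k, and define ζ_{jk}(n) and Ω_n as in the context. Then there exist a sequence of positive reals ξ_n → 0 and a sequence ε_n → 0 (both depending only on the source parameters) such that for all n: R_n ≤ Ω_n + (1/M)·Σ_{j=1}^r Σ_{k=1}^r p_j·π_k·1{ϱ(ζ_{jk}(n)) ∉ (ξ_n, 1−ξ_n)} + ε_n and R_n ≥ Ω_n − (1/M)·Σ_{j=1}^r Σ_{k=1}^r p_j·π_k·1{ϱ(ζ_{jk}(n)) ∉ (ξ_n, 1−ξ_n)} − ε_n. -/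
/-- α_{jk} = log[ p(j|1)p(j|j) / (p(k|1)p(j|k)) ] (state `1` is `0 : Fin r`). -/
noncomputable def alphaJK {r : ℕ} (p : Fin (r + 2) → Fin (r + 2) → ℝ)
    (j k : Fin (r + 2)) : ℝ :=
  Real.logb 2 (p j 0 * p j j / (p k 0 * p j k))

/-- ζ_{jk}(n) = M[−(n−1)log p(1|1) + log p(j|1) − log p(k|1) − log p_j]. -/
noncomputable def zetaJK {r : ℕ} (p : Fin (r + 2) → Fin (r + 2) → ℝ)
    (pinit : Fin (r + 2) → ℝ) (M : ℕ) (j k : Fin (r + 2)) (n : ℕ) : ℝ :=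
  (M : ℝ) * (-(((n : ℝ) - 1)) * Real.logb 2 (p 0 0)
    + Real.logb 2 (p j 0) - Real.logb 2 (p k 0) - Real.logb 2 (pinit j))

/-!
The redundancy `R_n` in fact satisfies `R_n - Ω_n → 0`, so the sandwich holds with
`ε_n = |R_n - Ω_n|` and any positive null sequence `ξ_n`.

Since `-log p(j|k) = (α_{jk} - α_{j1}) - log p(1|1) - log p(j|1) + log p(k|1)`, the code length of
a block from `j` to `k` telescopes to `(ζ_{jk} + N) / M`, where `N` is the sum along the block of
the integers `M (α_{jk} - α_{j1})`. Hence `ϱ` of it depends only on `j`, `k` and the phase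
`N mod M`, and `R_n` is an expectation for the Markov chain formed by the state and the phase.

Minimality of `M` says exactly that the phase increments generate `ZMod M`. Increments out of
state `1` vanish, so this chain is primitive, and its law converges to the product of `π` with the
uniform law. Under the limit law the expectation is exactly `Ω_n`, by averaging `ϱ((ζ + b) / M)`
over all residues `b`. The test functions vary with `n` but take values in `[0, 1]`, so convergence
in total variation suffices.
-/

open Filter Matrix Topology

/-! ### Convergence of primitive stochastic matrices -/

section Convergence

variable {S : Type*} [Fintype S] [DecidableEq S] {K : Matrix S S ℝ} {v : S → ℝ}

/-- Doeblin's contraction. Subtracting `δ` from every entry of `K` does not change its action on a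
row vector of sum zero. -/
theorem sum_abs_vecMul_le (hK : K ∈ rowStochastic ℝ S) {δ : ℝ} (hδ : ∀ s t, δ ≤ K s t)
    {x : S → ℝ} (hx : ∑ s, x s = 0) :
    ∑ t, |(x ᵥ* K) t| ≤ (1 - Fintype.card S * δ) * ∑ s, |x s| := by
  have hshift (t : S) : (x ᵥ* K) t = ∑ s, x s * (K s t - δ) := by
    simp [vecMul, dotProduct, mul_sub, ← Finset.sum_mul, hx]
  calc ∑ t, |(x ᵥ* K) t|
      ≤ ∑ t, ∑ s, |x s| * (K s t - δ) := by
        refine Finset.sum_le_sum fun t _ => ?_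
        rw [hshift]
        refine (Finset.abs_sum_le_sum_abs _ _).trans_eq (Finset.sum_congr rfl fun s _ => ?_)
        rw [abs_mul, abs_of_nonneg (sub_nonneg.2 (hδ s t))]
    _ = ∑ s, |x s| * (1 - Fintype.card S * δ) := by
        rw [Finset.sum_comm]
        simp [← Finset.mul_sum, sum_row_of_mem_rowStochastic hK]
    _ = (1 - Fintype.card S * δ) * ∑ s, |x s| := by rw [← Finset.sum_mul, mul_comm]

theorem sum_vecMul_of_mem_rowStochastic (hK : K ∈ rowStochastic ℝ S) (x : S → ℝ) :
    ∑ t, (x ᵥ* K) t = ∑ s, x s := by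
  simpa only [one_vecMul_of_mem_rowStochastic hK, dotProduct_one] using
    (dotProduct_mulVec x K 1).symm

theorem tendsto_sum_abs_vecMul_pow (hK : K ∈ rowStochastic ℝ S) (hprim : K.IsPrimitive)
    {x : S → ℝ} (hx : ∑ s, x s = 0) :
    Tendsto (fun n : ℕ => ∑ t, |(x ᵥ* K ^ n) t|) atTop (𝓝 0) := by
  set D : ℕ → ℝ := fun n => ∑ t, |(x ᵥ* K ^ n) t| with hD
  have hsum (n : ℕ) : ∑ t, (x ᵥ* K ^ n) t = 0 := by
    rw [sum_vecMul_of_mem_rowStochastic (pow_mem hK n), hx]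
  have hD_nonneg (n : ℕ) : 0 ≤ D n := Finset.sum_nonneg fun _ _ => abs_nonneg _
  have hD_anti : Antitone D := antitone_nat_of_succ_le fun n => by
    simpa [hD, pow_succ] using
      sum_abs_vecMul_le hK (δ := 0) (fun _ _ => nonneg_of_mem_rowStochastic hK) (hsum n)
  obtain ⟨ℓ, hℓ⟩ : ∃ ℓ, Tendsto D atTop (𝓝 ℓ) :=
    ⟨_, tendsto_atTop_ciInf hD_anti ⟨0, by rintro _ ⟨n, rfl⟩; exact hD_nonneg n⟩⟩
  rcases isEmpty_or_nonempty S with hS | hS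
  · simp [hD]
  obtain ⟨L, -, hL⟩ := hprim.exists_pos_pow
  obtain ⟨⟨s₀, t₀⟩, hmin⟩ := Finite.exists_min fun q : S × S => (K ^ L) q.1 q.2
  set δ : ℝ := (K ^ L) s₀ t₀
  have hcontr (n : ℕ) : D (n + L) ≤ (1 - Fintype.card S * δ) * D n := by
    simpa [hD, pow_add] using
      sum_abs_vecMul_le (pow_mem hK L) (fun s t => hmin (s, t)) (hsum n)
  have hℓ_le : ℓ ≤ (1 - Fintype.card S * δ) * ℓ :=
    le_of_tendsto_of_tendsto' ((tendsto_add_atTop_iff_nat L).2 hℓ) (hℓ.const_mul _) hcontr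
  have hgap : 0 < Fintype.card S * δ := mul_pos (mod_cast Fintype.card_pos) (hL s₀ t₀)
  have hℓ_nonneg : 0 ≤ ℓ := ge_of_tendsto' hℓ hD_nonneg
  have hℓ_zero : ℓ = 0 := by nlinarith
  rwa [hℓ_zero] at hℓ

theorem vecMul_pow_of_vecMul_eq (hv : v ᵥ* K = v) (n : ℕ) : v ᵥ* K ^ n = v := by
  induction n with
  | zero => simp
  | succ n ih => rw [pow_succ, ← vecMul_vecMul, ih, hv]

theorem tendsto_pow_mulVec_sub_dotProduct (hK : K ∈ rowStochastic ℝ S) (hprim : K.IsPrimitive)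
    (hv : v ᵥ* K = v) (hv_sum : ∑ s, v s = 1) {g : ℕ → S → ℝ} {C : ℝ}
    (hg : ∀ n t, |g n t| ≤ C) (s : S) :
    Tendsto (fun n : ℕ => (K ^ n *ᵥ g n) s - v ⬝ᵥ g n) atTop (𝓝 0) := by
  set x : S → ℝ := Pi.single s 1 - v with hx
  have hx_sum : ∑ t, x t = 0 := by simp [hx, hv_sum]
  have hdiff (n : ℕ) : (K ^ n *ᵥ g n) s - v ⬝ᵥ g n = (x ᵥ* K ^ n) ⬝ᵥ g n := by
    rw [hx, sub_vecMul, vecMul_pow_of_vecMul_eq hv, sub_dotProduct, ← dotProduct_mulVec,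
      single_one_dotProduct]
  refine squeeze_zero_norm (fun n => ?_)
    (by simpa using (tendsto_sum_abs_vecMul_pow hK hprim hx_sum).mul_const C)
  rw [Real.norm_eq_abs, hdiff, dotProduct, Finset.sum_mul]
  refine (Finset.abs_sum_le_sum_abs _ _).trans (Finset.sum_le_sum fun t _ => ?_)
  rw [abs_mul]
  exact mul_le_mul_of_nonneg_left (hg n t) (abs_nonneg _)

end Convergence

/-! ### Products and sums along a trajectory -/

section Path

variable {ι : Type*}

/-- The product of the weights `w j k` over all steps `k → j` of the trajectory `x`; its additive
version `pathSum` accumulates a phase. As in `p(j|k)`, the arrival state comes first. -/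
@[to_additive]
def pathProd {R : Type*} [CommMonoid R] (w : ι → ι → R) {n : ℕ} (x : Fin (n + 1) → ι) : R :=
  ∏ t : Fin n, w (x t.succ) (x t.castSucc)

@[to_additive]
theorem pathProd_cons {R : Type*} [CommMonoid R] (w : ι → ι → R) {n : ℕ} (i : ι)
    (x : Fin (n + 1) → ι) :
    pathProd w (Fin.cons i x : Fin (n + 2) → ι) = w (x 0) i * pathProd w x := by
  simp [pathProd, Fin.prod_univ_succ]

theorem pathSum_sub_eq {R : Type*} [AddCommGroup R] (u : ι → R) {n : ℕ} (x : Fin (n + 1) → ι) :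
    pathSum (fun j k => u j - u k) x = u (x (Fin.last n)) - u (x 0) := by
  have htotal := (Fin.sum_univ_succ fun t => u (x t)).symm.trans
    (Fin.sum_univ_castSucc fun t => u (x t))
  rw [pathSum, Finset.sum_sub_distrib, sub_eq_sub_iff_add_eq_add, add_comm, htotal, add_comm]

end Path

/-! ### The skew product chain -/

section SkewProduct

variable {ι G : Type*}

/-- Transition matrix of the pair (current state, accumulated phase): a step from `k` to `j` has
probability `p j k` and adds `f j k` to the phase. Rows index the departure. -/
def skewKernel [Add G] [DecidableEq G] (p : ι → ι → ℝ) (f : ι → ι → G) : Matrix (ι × G) (ι × G) ℝ :=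
  Matrix.of fun s t => if t.2 = s.2 + f t.1 s.1 then p t.1 s.1 else 0

/-- The product of a vector `π` on the states with the uniform law on the phases. -/
noncomputable def prodUniform (G : Type*) [Fintype G] (π : ι → ℝ) (s : ι × G) : ℝ :=
  π s.1 / Fintype.card G

theorem skewKernel_apply_nonneg [Add G] [DecidableEq G] {p : ι → ι → ℝ}
    (hp : ∀ j k, 0 ≤ p j k) (f : ι → ι → G) (s t : ι × G) : 0 ≤ skewKernel p f s t := by
  rw [skewKernel, of_apply]
  split_ifs
  exacts [hp _ _, le_rfl]

variable [Fintype ι] [Fintype G]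

theorem sum_prodUniform [Nonempty G] (π : ι → ℝ) : ∑ s, prodUniform G π s = ∑ j, π j := by
  simp [Fintype.sum_prod_type, prodUniform, mul_div_cancel₀]

variable [DecidableEq G]

theorem skewKernel_mulVec [Add G] (p : ι → ι → ℝ) (f : ι → ι → G) (g : ι × G → ℝ) (s : ι × G) :
    (skewKernel p f *ᵥ g) s = ∑ j, p j s.1 * g (j, s.2 + f j s.1) := by
  simp [mulVec, dotProduct, Fintype.sum_prod_type, skewKernel]

theorem skewKernel_pow_mulVec [AddCommMonoid G] [DecidableEq ι] (p : ι → ι → ℝ)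
    (f : ι → ι → G) (g : ι × G → ℝ) (n : ℕ) (s : ι × G) :
    (skewKernel p f ^ n *ᵥ g) s = ∑ y : Fin n → ι,
      let x : Fin (n + 1) → ι := Fin.cons s.1 y
      pathProd p x * g (x (Fin.last n), s.2 + pathSum f x) := by
  induction n generalizing s with
  | zero => simp [pathProd, pathSum]
  | succ n ih =>
    rw [pow_succ', ← mulVec_mulVec, skewKernel_mulVec,
      ← (Fin.consEquiv fun _ : Fin (n + 1) => ι).sum_comp, Fintype.sum_prod_type]
    refine Finset.sum_congr rfl fun j _ => ?_
    rw [ih, Finset.mul_sum]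
    refine Finset.sum_congr rfl fun y _ => ?_
    simp [Fin.consEquiv, pathProd_cons, pathSum_cons, ← Fin.succ_last, mul_assoc, add_assoc]

theorem skewKernel_mem_rowStochastic [Add G] [DecidableEq ι] {p : ι → ι → ℝ}
    (hp : ∀ j k, 0 ≤ p j k) (hp_sum : ∀ k, ∑ j, p j k = 1) (f : ι → ι → G) :
    skewKernel p f ∈ rowStochastic ℝ (ι × G) := by
  refine mem_rowStochastic.2 ⟨skewKernel_apply_nonneg hp f, funext fun s => ?_⟩
  simp [skewKernel_mulVec, hp_sum]

theorem prodUniform_vecMul_skewKernel [AddGroup G] {p : ι → ι → ℝ} {π : ι → ℝ}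
    (hπ : ∀ j, π j = ∑ k, p j k * π k) (f : ι → ι → G) :
    prodUniform G π ᵥ* skewKernel p f = prodUniform G π := by
  ext ⟨j, b⟩
  have hphase (k : ι) (a : G) : b = a + f j k ↔ a = b - f j k := by
    rw [eq_sub_iff_add_eq, eq_comm]
  simp [vecMul, dotProduct, Fintype.sum_prod_type, skewKernel, prodUniform, hphase,
    hπ j, Finset.sum_div, mul_div_assoc, mul_comm]

end SkewProduct

/-! ### Primitivity of the skew product chain -/

section Primitive

theorem pow_add_apply_pos {S R : Type*} [Fintype S] [DecidableEq S] [Semiring R] [PartialOrder R]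
    [IsStrictOrderedRing R] {K : Matrix S S R} (hK : ∀ s t, 0 ≤ K s t) {m n : ℕ} {s u t : S}
    (hm : 0 < (K ^ m) s u) (hn : 0 < (K ^ n) u t) : 0 < (K ^ (m + n)) s t := by
  rw [pow_add, mul_apply]
  exact Finset.sum_pos'
    (fun c _ => mul_nonneg (pow_apply_nonneg hK m s c) (pow_apply_nonneg hK n c t))
    ⟨u, Finset.mem_univ u, mul_pos hm hn⟩

variable {ι G : Type*} [Fintype ι] [DecidableEq ι] [Fintype G] [DecidableEq G] [AddCommGroup G]
  {p : ι → ι → ℝ} {f : ι → ι → G} {i₀ : ι}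

theorem skewKernel_step_pos (hp : ∀ j k, 0 < p j k) (f : ι → ι → G) (k j : ι) (a : G) :
    0 < (skewKernel p f ^ 1) (k, a) (j, a + f j k) := by
  simp [skewKernel, hp]

/-- The phases that can be accumulated along a loop at the state `i₀`. -/
def loopPhases (hp : ∀ j k, 0 < p j k) (f : ι → ι → G) (i₀ : ι) : AddSubmonoid G where
  carrier := {b | ∃ n : ℕ, ∀ a, 0 < (skewKernel p f ^ n) (i₀, a) (i₀, a + b)}
  zero_mem' := ⟨0, fun a => by simp⟩
  add_mem' := by
    rintro b c ⟨m, hm⟩ ⟨n, hn⟩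
    have hnonneg := skewKernel_apply_nonneg (fun j k => (hp j k).le) f
    refine ⟨m + n, fun a => ?_⟩
    rw [← add_assoc]
    exact pow_add_apply_pos hnonneg (hm a) (hn (a + b))

/-- A submonoid of a finite group is a subgroup, so it suffices that every `f j k` is a difference
of two loop phases, namely those of `i₀ → k → j → i₀` and `i₀ → j → i₀`. -/
theorem loopPhases_eq_top (hp : ∀ j k, 0 < p j k) (hf : ∀ j, f j i₀ = 0)
    (hgen : AddSubgroup.closure (Set.range (Function.uncurry f)) = ⊤) :
    loopPhases hp f i₀ = ⊤ := by
  have hnonneg := skewKernel_apply_nonneg (fun j k => (hp j k).le) f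
  have hout (j : ι) (a : G) : 0 < (skewKernel p f ^ 1) (i₀, a) (j, a) := by
    simpa [hf] using skewKernel_step_pos hp f i₀ j a
  have hshort (j : ι) : f i₀ j ∈ loopPhases hp f i₀ :=
    ⟨1 + 1, fun a => pow_add_apply_pos hnonneg (hout j a) (skewKernel_step_pos hp f j i₀ a)⟩
  have hlong (j k : ι) : f j k + f i₀ j ∈ loopPhases hp f i₀ := by
    refine ⟨1 + 1 + 1, fun a => ?_⟩
    rw [← add_assoc]
    exact pow_add_apply_pos hnonneg
      (pow_add_apply_pos hnonneg (hout k a) (skewKernel_step_pos hp f k j a))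
      (skewKernel_step_pos hp f j i₀ (a + f j k))
  set H := AddSubgroup.closure (loopPhases hp f i₀ : Set G) with hH
  have hH_eq : H.toAddSubmonoid = loopPhases hp f i₀ := by
    rw [hH, AddSubgroup.closure_toAddSubmonoid_of_finite, AddSubmonoid.closure_eq]
  have hfH : Set.range (Function.uncurry f) ⊆ H := by
    rintro _ ⟨⟨j, k⟩, rfl⟩
    simpa using H.sub_mem (AddSubgroup.subset_closure (hlong j k))
      (AddSubgroup.subset_closure (hshort j))
  have hH_top : H = ⊤ := top_le_iff.1 (hgen ▸ (AddSubgroup.closure_le H).2 hfH)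
  rw [← hH_eq, hH_top, AddSubgroup.top_toAddSubmonoid]

/-- The phase-free loop `i₀ → i₀` pads the loops realising the different phases to a common
length. -/
theorem exists_loop_length (hp : ∀ j k, 0 < p j k) (hf : ∀ j, f j i₀ = 0)
    (hgen : AddSubgroup.closure (Set.range (Function.uncurry f)) = ⊤) :
    ∃ N : ℕ, ∀ a b : G, 0 < (skewKernel p f ^ N) (i₀, a) (i₀, b) := by
  have hnonneg := skewKernel_apply_nonneg (fun j k => (hp j k).le) f
  have hloop (b : G) : b ∈ loopPhases hp f i₀ := by simp [loopPhases_eq_top hp hf hgen]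
  choose n hn using hloop
  have hidle (m : ℕ) (a : G) : 0 < (skewKernel p f ^ m) (i₀, a) (i₀, a) := by
    induction m with
    | zero => simp
    | succ m ih =>
      exact pow_add_apply_pos hnonneg ih (by simpa [hf] using skewKernel_step_pos hp f i₀ i₀ a)
  refine ⟨∑ b, n b, fun a b => ?_⟩
  have hle : n (b - a) ≤ ∑ b, n b :=
    Finset.single_le_sum (fun _ _ => Nat.zero_le _) (Finset.mem_univ _)
  simpa [Nat.sub_add_cancel hle] using
    pow_add_apply_pos hnonneg (hidle (∑ b, n b - n (b - a)) a) (hn (b - a) a)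

theorem skewKernel_isPrimitive (hp : ∀ j k, 0 < p j k) (hf : ∀ j, f j i₀ = 0)
    (hgen : AddSubgroup.closure (Set.range (Function.uncurry f)) = ⊤) :
    (skewKernel p f).IsPrimitive := by
  have hnonneg := skewKernel_apply_nonneg (fun j k => (hp j k).le) f
  obtain ⟨N, hN⟩ := exists_loop_length hp hf hgen
  refine ⟨hnonneg, 1 + N + 1, by lia, ?_⟩
  rintro ⟨k, a⟩ ⟨j, b⟩
  have henter := skewKernel_step_pos hp f k i₀ a
  have hleave : 0 < (skewKernel p f ^ 1) (i₀, b) (j, b) := by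
    simpa [hf] using skewKernel_step_pos hp f i₀ j b
  exact pow_add_apply_pos hnonneg (pow_add_apply_pos hnonneg henter (hN _ b)) hleave

end Primitive

/-! ### Minimal common denominators -/

/-- The order `c` of the subgroup generated by the `a i` satisfies `M ∣ c * a i`, so `c` clears the
denominators of all the `x i`. -/
theorem closure_range_intCast_eq_top {ι 𝕜 : Type*} [Field 𝕜] [CharZero 𝕜] {x : ι → 𝕜} {M : ℕ}
    (hM : IsLeast {m : ℕ | 0 < m ∧ ∀ i, ∃ z : ℤ, (m : 𝕜) * x i = z} M) {a : ι → ℤ}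
    (ha : ∀ i, (M : 𝕜) * x i = a i) :
    AddSubgroup.closure (Set.range fun i => (a i : ZMod M)) = ⊤ := by
  have : NeZero M := ⟨hM.1.1.ne'⟩
  set H := AddSubgroup.closure (Set.range fun i => (a i : ZMod M))
  have hdvd (i : ι) : (M : ℤ) ∣ Nat.card H * a i := by
    have hmem : (a i : ZMod M) ∈ H := AddSubgroup.subset_closure ⟨i, rfl⟩
    have hzero : Nat.card H • (a i : ZMod M) = 0 :=
      congrArg Subtype.val (card_nsmul_eq_zero' (x := (⟨a i, hmem⟩ : H)))
    rw [← ZMod.intCast_zmod_eq_zero_iff_dvd]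
    simpa only [Int.cast_mul, Int.cast_natCast, nsmul_eq_mul] using hzero
  have hle : M ≤ Nat.card H := by
    refine hM.2 ⟨Nat.card_pos, fun i => ?_⟩
    obtain ⟨z, hz⟩ := hdvd i
    refine ⟨z, mul_left_cancel₀ (NeZero.ne (M : 𝕜)) ?_⟩
    rw [mul_left_comm, ha]
    exact_mod_cast hz
  exact AddSubgroup.eq_top_of_le_card H (by rwa [Nat.card_zmod])

theorem forall_exists_mul_sub_eq_intCast_iff {ι R : Type*} [Ring R] {α : ι → ι → R}
    (hα : ∀ j, α j j = 0) (i₀ : ι) (c : R) :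
    (∀ j k, ∃ z : ℤ, c * (α j k - α j i₀) = z) ↔ ∀ j k, ∃ z : ℤ, c * α j k = z := by
  refine ⟨fun h j k => ?_, fun h j k => ?_⟩
  · obtain ⟨z, hz⟩ := h j k
    obtain ⟨w, hw⟩ := h j j
    exact ⟨z - w, by push_cast; simp [← hz, ← hw, hα, mul_sub]⟩
  · obtain ⟨z, hz⟩ := h j k
    obtain ⟨w, hw⟩ := h j i₀
    exact ⟨z - w, by push_cast; rw [mul_sub, hz, hw]⟩

/-! ### The fractional part `vrho` on the lattice -/

section Lattice

theorem vrho_eq_fract_neg (u : ℝ) : vrho u = Int.fract (-u) := by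
  simp only [vrho, Int.fract, Int.floor_neg]
  push_cast
  ring

theorem vrho_nonneg (u : ℝ) : 0 ≤ vrho u := vrho_eq_fract_neg u ▸ Int.fract_nonneg _

theorem vrho_lt_one (u : ℝ) : vrho u < 1 := vrho_eq_fract_neg u ▸ Int.fract_lt_one _

theorem vrho_add_intCast (u : ℝ) (m : ℤ) : vrho (u + m) = vrho u := by
  simp [vrho]

/-- The value of `ϱ((z + N) / M)` at the integers `N` in the residue class `b`. -/
noncomputable def phaseVrho (M : ℕ) (z : ℝ) (b : ZMod M) : ℝ := vrho ((z + b.val) / M)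

theorem abs_phaseVrho_le_one (M : ℕ) (z : ℝ) (b : ZMod M) : |phaseVrho M z b| ≤ 1 :=
  (abs_of_nonneg (vrho_nonneg _)).trans_le (vrho_lt_one _).le

variable (M : ℕ) [NeZero M]

theorem vrho_add_intCast_div (z : ℝ) (N : ℤ) : vrho ((z + N) / M) = phaseVrho M z N := by
  have hN : (N : ℝ) = ((N : ZMod M).val : ℤ) + M * (N / M : ℤ) := by
    rw [ZMod.val_intCast]
    exact_mod_cast (Int.emod_add_mul_ediv N M).symm
  have hM : (M : ℝ) ≠ 0 := NeZero.ne _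
  rw [hN, ← add_assoc, add_div, mul_div_cancel_left₀ _ hM, vrho_add_intCast, phaseVrho,
    Int.cast_natCast]

theorem phaseVrho_neg_ceil_sub (z : ℝ) (b : ZMod M) :
    phaseVrho M z (-⌈z⌉ - b) = (vrho z + b.val) / M := by
  have hM : (0 : ℝ) < M := mod_cast NeZero.pos M
  have hb : (b.val : ℝ) + 1 ≤ M := mod_cast ZMod.val_lt b
  have hcast : (-⌈z⌉ - b : ZMod M) = ((-⌈z⌉ - b.val : ℤ) : ZMod M) := by simp
  have hneg : -((z + (-⌈z⌉ - b.val : ℤ)) / M) = (vrho z + b.val) / M := by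
    rw [vrho]
    push_cast
    ring
  rw [hcast, ← vrho_add_intCast_div, vrho_eq_fract_neg, hneg, Int.fract_eq_self]
  refine ⟨div_nonneg (add_nonneg (vrho_nonneg z) (Nat.cast_nonneg _)) hM.le, ?_⟩
  rw [div_lt_one hM]
  linarith [vrho_lt_one z]

theorem sum_zmod_val : ∑ b : ZMod M, (b.val : ℝ) = M * (M - 1) / 2 := by
  have hsum : ∑ b : ZMod M, (b.val : ℝ) = ∑ i ∈ Finset.range M, (i : ℝ) := by
    obtain ⟨m, rfl⟩ := Nat.exists_eq_succ_of_ne_zero (NeZero.ne M)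
    exact Fin.sum_univ_eq_sum_range (fun i => (i : ℝ)) (m + 1)
  have hgauss := congrArg (Nat.cast : ℕ → ℝ) (Finset.sum_range_id_mul_two M)
  push_cast [NeZero.one_le] at hgauss
  rw [hsum]
  linarith

/-- A form of Hermite's identity. -/
theorem sum_phaseVrho (z : ℝ) : ∑ b, phaseVrho M z b = vrho z + (M - 1) / 2 := by
  have hM : (M : ℝ) ≠ 0 := NeZero.ne _
  rw [← (Equiv.subLeft (-⌈z⌉ : ZMod M)).sum_comp]
  simp only [Equiv.subLeft_apply, phaseVrho_neg_ceil_sub]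
  rw [← Finset.sum_div, Finset.sum_add_distrib, sum_zmod_val]
  simp only [Finset.sum_const, Finset.card_univ, ZMod.card, nsmul_eq_mul]
  field_simp

end Lattice

/-! ### The redundancy of the Shannon code -/

section Redundancy

variable {r : ℕ} {p : Fin (r + 2) → Fin (r + 2) → ℝ} {pinit π : Fin (r + 2) → ℝ} {M : ℕ}

theorem alphaJK_self (hp : ∀ j k, 0 < p j k) (j : Fin (r + 2)) : alphaJK p j j = 0 := by
  rw [alphaJK, div_self (mul_pos (hp _ _) (hp _ _)).ne', Real.logb_one]

theorem neg_logb_eq_alphaJK_sub (hp : ∀ j k, 0 < p j k) (j k : Fin (r + 2)) :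
    -Real.logb 2 (p j k) = alphaJK p j k - alphaJK p j 0 - Real.logb 2 (p 0 0)
      - (Real.logb 2 (p j 0) - Real.logb 2 (p k 0)) := by
  have hα (k : Fin (r + 2)) : alphaJK p j k = Real.logb 2 (p j 0) + Real.logb 2 (p j j)
      - (Real.logb 2 (p k 0) + Real.logb 2 (p j k)) := by
    rw [alphaJK, Real.logb_div (mul_ne_zero (hp _ _).ne' (hp _ _).ne')
      (mul_ne_zero (hp _ _).ne' (hp _ _).ne'), Real.logb_mul (hp _ _).ne' (hp _ _).ne',
      Real.logb_mul (hp _ _).ne' (hp _ _).ne']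
  rw [hα, hα]
  ring

/-- The integer `M (α_{jk} - α_{j1})` by which a step from `k` to `j` advances the phase. The floor
only serves to make it an integer for arbitrary `M`. -/
noncomputable def phaseIncrement (p : Fin (r + 2) → Fin (r + 2) → ℝ) (M : ℕ)
    (j k : Fin (r + 2)) : ℤ :=
  ⌊(M : ℝ) * (alphaJK p j k - alphaJK p j 0)⌋

theorem phaseIncrement_zero_right (p : Fin (r + 2) → Fin (r + 2) → ℝ) (M : ℕ) (j : Fin (r + 2)) :
    phaseIncrement p M j 0 = 0 := by
  simp [phaseIncrement]

theorem intCast_phaseIncrement (hp : ∀ j k, 0 < p j k)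
    (hM : ∀ j k, ∃ z : ℤ, (M : ℝ) * alphaJK p j k = z) (j k : Fin (r + 2)) :
    (phaseIncrement p M j k : ℝ) = M * (alphaJK p j k - alphaJK p j 0) := by
  obtain ⟨z, hz⟩ := (forall_exists_mul_sub_eq_intCast_iff (alphaJK_self hp) 0 M).2 hM j k
  rw [phaseIncrement, hz, Int.floor_intCast]

theorem closure_range_phaseIncrement_eq_top (hp : ∀ j k, 0 < p j k)
    (hM : IsLeast {m : ℕ | 0 < m ∧ ∀ j k, ∃ z : ℤ, (m : ℝ) * alphaJK p j k = (z : ℝ)} M) :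
    AddSubgroup.closure
      (Set.range (Function.uncurry fun j k => (phaseIncrement p M j k : ZMod M))) = ⊤ := by
  refine closure_range_intCast_eq_top
    (x := Function.uncurry fun j k => alphaJK p j k - alphaJK p j 0)
    (a := Function.uncurry (phaseIncrement p M)) ?_
    fun ⟨j, k⟩ => (intCast_phaseIncrement hp hM.1.2 j k).symm
  simpa only [Prod.forall, Function.uncurry_apply_pair,
    forall_exists_mul_sub_eq_intCast_iff (alphaJK_self hp) 0] using hM

theorem markovProb_eq_mul_pathProd {m : ℕ} (pinit : Fin m → ℝ) (p : Fin m → Fin m → ℝ) {n : ℕ}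
    (x : Fin (n + 1) → Fin m) : markovProb pinit p x = pinit (x 0) * pathProd p x :=
  rfl

theorem neg_logb_pathProd (hp : ∀ j k, 0 < p j k) {n : ℕ} (x : Fin (n + 1) → Fin (r + 2)) :
    -Real.logb 2 (pathProd p x) = pathSum (fun j k => -Real.logb 2 (p j k)) x := by
  rw [pathProd, Real.logb_prod _ _ fun t _ => (hp _ _).ne', pathSum, Finset.sum_neg_distrib]

theorem neg_logb_markovProb [NeZero M] (hp : ∀ j k, 0 < p j k)
    (hM : ∀ j k, ∃ z : ℤ, (M : ℝ) * alphaJK p j k = z) {n : ℕ} {x : Fin (n + 1) → Fin (r + 2)}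
    (hx : 0 < pinit (x 0)) :
    -Real.logb 2 (markovProb pinit p x) =
      (zetaJK p pinit M (x 0) (x (Fin.last n)) (n + 1)
        + (pathSum (phaseIncrement p M) x : ℤ)) / M := by
  have hM_ne : (M : ℝ) ≠ 0 := NeZero.ne _
  have hpath : pathProd p x ≠ 0 := Finset.prod_ne_zero_iff.2 fun t _ => (hp _ _).ne'
  have hstep (j k : Fin (r + 2)) : -Real.logb 2 (p j k) = phaseIncrement p M j k / M
      - Real.logb 2 (p 0 0) - (Real.logb 2 (p j 0) - Real.logb 2 (p k 0)) := by
    rw [intCast_phaseIncrement hp hM, mul_div_cancel_left₀ _ hM_ne, neg_logb_eq_alphaJK_sub hp]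
  have hsum : -Real.logb 2 (pathProd p x) = (pathSum (phaseIncrement p M) x : ℤ) / M
      - n * Real.logb 2 (p 0 0)
      - (Real.logb 2 (p (x (Fin.last n)) 0) - Real.logb 2 (p (x 0) 0)) := by
    rw [neg_logb_pathProd hp, ← pathSum_sub_eq fun j => Real.logb 2 (p j 0)]
    simp [pathSum, hstep, Finset.sum_div]
  rw [markovProb_eq_mul_pathProd, Real.logb_mul hx.ne' hpath, neg_add, hsum, zetaJK]
  push_cast
  field_simp
  ring

theorem shannonRed_eq_sum_mulVec [NeZero M] (hp : ∀ j k, 0 < p j k) (hpinit : ∀ j, 0 ≤ pinit j)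
    (hM : ∀ j k, ∃ z : ℤ, (M : ℝ) * alphaJK p j k = z) (n : ℕ) :
    shannonRed (r + 2) n pinit p = ∑ i, pinit i *
      (skewKernel p (fun j k => (phaseIncrement p M j k : ZMod M)) ^ n *ᵥ
        fun s => phaseVrho M (zetaJK p pinit M i s.1 (n + 1)) s.2) (i, 0) := by
  rw [shannonRed, ← (Fin.consEquiv fun _ : Fin (n + 1) => Fin (r + 2)).sum_comp,
    Fintype.sum_prod_type]
  refine Finset.sum_congr rfl fun i _ => ?_
  rw [skewKernel_pow_mulVec, Finset.mul_sum]
  refine Finset.sum_congr rfl fun y _ => ?_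
  rw [markovProb_eq_mul_pathProd, mul_assoc]
  rcases (hpinit i).eq_or_lt with hi | hi
  · simp [Fin.consEquiv, ← hi]
  · rw [← markovProb_eq_mul_pathProd, neg_logb_markovProb hp hM (by simpa [Fin.consEquiv] using hi),
      vrho_add_intCast_div]
    simp [Fin.consEquiv, pathSum]

/-- The approximation `Ω_n` of the redundancy at block length `n`. -/
noncomputable def shannonOmega (p : Fin (r + 2) → Fin (r + 2) → ℝ) (pinit π : Fin (r + 2) → ℝ)
    (M n : ℕ) : ℝ :=
  1 / 2 * (1 - 1 / (M : ℝ))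
    + (1 / (M : ℝ)) * ∑ j, ∑ k, pinit j * π k * vrho (zetaJK p pinit M j k n)

theorem shannonOmega_eq_sum_dotProduct [NeZero M] (hpinit : ∑ j, pinit j = 1)
    (hπ : ∑ j, π j = 1) (n : ℕ) :
    shannonOmega p pinit π M n = ∑ i, pinit i *
      (prodUniform (ZMod M) π ⬝ᵥ fun s => phaseVrho M (zetaJK p pinit M i s.1 n) s.2) := by
  have hdot (i : Fin (r + 2)) :
      (prodUniform (ZMod M) π ⬝ᵥ fun s => phaseVrho M (zetaJK p pinit M i s.1 n) s.2) =
        1 / 2 * (1 - 1 / (M : ℝ)) + 1 / M * ∑ k, π k * vrho (zetaJK p pinit M i k n) := by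
    have hM : (M : ℝ) ≠ 0 := NeZero.ne _
    calc _ = ∑ k, π k / M * (vrho (zetaJK p pinit M i k n) + (M - 1) / 2) := by
          simp [dotProduct, Fintype.sum_prod_type, prodUniform, ← Finset.mul_sum, sum_phaseVrho]
      _ = (∑ k, π k) * (1 / 2 * (1 - 1 / (M : ℝ)))
            + 1 / M * ∑ k, π k * vrho (zetaJK p pinit M i k n) := by
          rw [Finset.sum_mul, Finset.mul_sum, ← Finset.sum_add_distrib]
          refine Finset.sum_congr rfl fun k _ => ?_
          field_simp
          ring
      _ = _ := by rw [hπ, one_mul]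
  simp only [hdot, mul_add, Finset.sum_add_distrib, ← Finset.sum_mul, hpinit, one_mul,
    shannonOmega, Finset.mul_sum]
  simp only [mul_assoc, mul_left_comm]

open scoped Classical in
/-- The error weight `(1/M) Σ_{jk} p_j π_k 1{ϱ(ζ_{jk}(n)) ∉ (ξ, 1 - ξ)}` at block length `n`. -/
noncomputable def shannonBoundaryWeight (p : Fin (r + 2) → Fin (r + 2) → ℝ)
    (pinit π : Fin (r + 2) → ℝ) (M n : ℕ) (ξ : ℝ) : ℝ :=
  (1 / (M : ℝ)) * (∑ j, ∑ k, pinit j * π k *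
    (if vrho (zetaJK p pinit M j k n) ∈ Set.Ioo ξ (1 - ξ) then (0 : ℝ) else 1))

theorem shannonBoundaryWeight_nonneg (hpinit : ∀ j, 0 ≤ pinit j) (hπ : ∀ j, 0 ≤ π j) (n : ℕ)
    (ξ : ℝ) : 0 ≤ shannonBoundaryWeight p pinit π M n ξ := by
  refine mul_nonneg (by positivity) (Finset.sum_nonneg fun j _ => Finset.sum_nonneg fun k _ =>
    mul_nonneg (mul_nonneg (hpinit j) (hπ k)) ?_)
  split_ifs <;> norm_num

theorem exists_sandwich_of_tendsto_sub {R Ω : ℕ → ℝ} (h : Tendsto (fun n => R n - Ω n) atTop (𝓝 0))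
    {W : ℕ → ℝ → ℝ} (hW : ∀ n ξ, 0 ≤ W n ξ) :
    ∃ ξ ε : ℕ → ℝ, (∀ n, 0 < ξ n) ∧ Tendsto ξ atTop (𝓝 0) ∧ Tendsto ε atTop (𝓝 0) ∧
      ∀ n, R n ≤ Ω n + W n (ξ n) + ε n ∧ R n ≥ Ω n - W n (ξ n) - ε n := by
  refine ⟨fun n => 1 / ((n : ℝ) + 1), fun n => |R n - Ω n|, fun n => by positivity,
    tendsto_one_div_add_atTop_nhds_zero_nat, by simpa using h.abs, fun n => ?_⟩
  have hWn := hW n (1 / ((n : ℝ) + 1))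
  constructor
  · linarith [le_abs_self (R n - Ω n)]
  · linarith [neg_abs_le (R n - Ω n)]

theorem shannon_redundancy_rational_case_general (hp : ∀ j k, 0 < p j k)
    (hp_sum : ∀ k, ∑ j, p j k = 1) (hpinit : ∀ j, 0 ≤ pinit j) (hpinit_sum : ∑ j, pinit j = 1)
    (hπ : ∀ j, π j = ∑ k, p j k * π k) (hπ_sum : ∑ j, π j = 1)
    (hM : IsLeast {m : ℕ | 0 < m ∧ ∀ j k, ∃ z : ℤ, (m : ℝ) * alphaJK p j k = (z : ℝ)} M) :
    Tendsto (fun n => shannonRed (r + 2) n pinit p - shannonOmega p pinit π M (n + 1)) atTop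
      (𝓝 0) := by
  have : NeZero M := ⟨hM.1.1.ne'⟩
  have hstoch := skewKernel_mem_rowStochastic (fun j k => (hp j k).le) hp_sum
    fun j k => (phaseIncrement p M j k : ZMod M)
  have hprim := skewKernel_isPrimitive (i₀ := 0) hp
    (fun j => by rw [phaseIncrement_zero_right, Int.cast_zero])
    (closure_range_phaseIncrement_eq_top hp hM)
  have hlim (i : Fin (r + 2)) := tendsto_pow_mulVec_sub_dotProduct hstoch hprim
    (prodUniform_vecMul_skewKernel hπ _) ((sum_prodUniform π).trans hπ_sum)
    (fun n s => abs_phaseVrho_le_one M (zetaJK p pinit M i s.1 (n + 1)) s.2) (i, 0)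
  simpa only [shannonRed_eq_sum_mulVec hp hpinit hM.1.2,
    shannonOmega_eq_sum_dotProduct hpinit_sum hπ_sum, ← Finset.sum_sub_distrib, ← mul_sub,
    mul_zero, Finset.sum_const_zero] using
      tendsto_finsetSum Finset.univ fun i _ => (hlim i).const_mul (pinit i)

end Redundancy

open scoped Classical in
theorem shannon_redundancy_rational_case (r : ℕ)
    (p : Fin (r + 2) → Fin (r + 2) → ℝ) (pinit : Fin (r + 2) → ℝ)
    (hppos : ∀ j k, 0 < p j k) (hpsum : ∀ k, ∑ j, p j k = 1)
    (hinitpos : ∀ j, 0 < pinit j) (hinit1 : ∑ j, pinit j = 1)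
    (π : Fin (r + 2) → ℝ) (hπ0 : ∀ j, 0 ≤ π j)
    (hπstat : ∀ j, π j = ∑ k, p j k * π k) (hπ1 : ∑ j, π j = 1)
    (hrat : ∀ j k, ∃ q : ℚ, alphaJK p j k = (q : ℝ))
    (M : ℕ)
    (hM : IsLeast {m : ℕ | 0 < m ∧ ∀ j k, ∃ z : ℤ, (m : ℝ) * alphaJK p j k = (z : ℝ)} M) :
    ∃ ξ ε : ℕ → ℝ, (∀ n, 0 < ξ n) ∧
      Filter.Tendsto ξ Filter.atTop (nhds 0) ∧
      Filter.Tendsto ε Filter.atTop (nhds 0) ∧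
      ∀ n : ℕ,
        shannonRed (r + 2) n pinit p ≤
          (1 / 2 * (1 - 1 / (M : ℝ))
            + (1 / (M : ℝ)) * ∑ j, ∑ k,
                pinit j * π k * vrho (zetaJK p pinit M j k (n + 1)))
          + (1 / (M : ℝ)) * (∑ j, ∑ k, pinit j * π k *
              (if vrho (zetaJK p pinit M j k (n + 1)) ∈ Set.Ioo (ξ n) (1 - ξ n)
                then (0 : ℝ) else 1))
          + ε n ∧
        shannonRed (r + 2) n pinit p ≥
          (1 / 2 * (1 - 1 / (M : ℝ))
            + (1 / (M : ℝ)) * ∑ j, ∑ k,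
                pinit j * π k * vrho (zetaJK p pinit M j k (n + 1)))
          - (1 / (M : ℝ)) * (∑ j, ∑ k, pinit j * π k *
              (if vrho (zetaJK p pinit M j k (n + 1)) ∈ Set.Ioo (ξ n) (1 - ξ n)
                then (0 : ℝ) else 1))
          - ε n := by
  exact exists_sandwich_of_tendsto_sub
    (shannon_redundancy_rational_case_general hppos hpsum (fun j => (hinitpos j).le) hinit1 hπstat
      hπ1 hM)
    fun n => shannonBoundaryWeight_nonneg (fun j => (hinitpos j).le) hπ0 (n + 1)
end

section
/- Consider the Shannon code of block length n for an irreducible aperiodic first-order Markov source on {1,…,r}. If ρ(A_m) < 1 for every positive integer m, then the average redundancy satisfies R_n = 1/2 + o(1), i.e., lim_{n→∞} R_n = 1/2. -/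
/-- The transition matrix `P` with entry `(j,k)` equal to `p(j|k)`. -/
def Pmat {r : ℕ} (p : Fin r → Fin r → ℝ) : Matrix (Fin r) (Fin r) ℝ :=
  Matrix.of fun j k => p j k

/-- The matrix A_m with (j,k) entry p(k|j)·exp(−2πi·m·log₂ p(k|j)) when
p(k|j) > 0 and 0 otherwise. -/
noncomputable def Amat {r : ℕ} (p : Fin r → Fin r → ℝ) (m : ℤ) :
    Matrix (Fin r) (Fin r) ℂ :=
  Matrix.of fun j k =>
    if 0 < p k j then
      (p k j : ℂ) *
        Complex.exp (-(2 * (Real.pi : ℂ) * Complex.I * (m : ℂ) *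
          ((Real.logb 2 (p k j) : ℝ) : ℂ)))
    else 0

/-- Spectral radius: supremum of the moduli of the eigenvalues. -/
noncomputable def specRad {r : ℕ} (A : Matrix (Fin r) (Fin r) ℂ) : ℝ :=
  sSup {x : ℝ | ∃ lam : ℂ,
    (∃ v : Fin r → ℂ, v ≠ 0 ∧ A.mulVec v = lam • v) ∧ x = ‖lam‖}

/-!
The redundancy is `1 / 2 + 𝔼[B̄₁(log₂ μ(X))]`, where `B̄₁` is the 1-periodic sawtooth `{u} - 1 / 2`,
so it suffices that `log₂ μ(X)` becomes equidistributed modulo `1`.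

Equidistribution follows from Weyl's criterion. The weight `q ↦ q · exp(-2πi m log₂ q)` is
multiplicative, so the `m`-th Fourier coefficient of the law of `log₂ μ(X)` is a sum over paths of
products of entries of `A_m`, that is, `c ⬝ A_mⁿ 1` with `c` the weights of the initial
probabilities; it tends to `0` by Gelfand's formula.

Weyl's criterion concerns continuous test functions, while `B̄₁` jumps at the integers. Up to a
factor `2`, however, `B̄₁` is the derivative of the continuous periodized Bernoulli function `B̄₂`,
and `B̄₂(t + h) - B̄₂(t) ≤ 2 h B̄₁(t) + h²` for all `h`. The expectation of the left-hand side
tends to `0` by equidistribution and invariance of Haar measure, so taking `h = ± ε` bounds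
`𝔼[B̄₁]` on both sides.
-/

open AddCircle Filter MeasureTheory Matrix Topology

/-! ### Matrices of spectral radius less than one -/

theorem tendsto_pow_atTop_nhds_zero_of_spectralRadius_lt_one {A : Type*} [NormedRing A]
    [NormedAlgebra ℂ A] [CompleteSpace A] {a : A} (ha : spectralRadius ℂ a < 1) :
    Tendsto (fun n : ℕ => a ^ n) atTop (𝓝 0) := by
  obtain ⟨c, hac, hc⟩ := ENNReal.lt_iff_exists_nnreal_btwn.1 ha
  have norm_pow_le : ∀ᶠ n : ℕ in atTop, ‖a ^ n‖ ≤ (c : ℝ) ^ n := by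
    filter_upwards [(spectrum.pow_nnnorm_pow_one_div_tendsto_nhds_spectralRadius
      a).eventually_lt_const hac, eventually_ne_atTop 0] with n hn hn0
    rw [one_div, ENNReal.rpow_inv_lt_iff (by positivity), ENNReal.rpow_natCast] at hn
    exact_mod_cast hn.le
  exact squeeze_zero_norm' norm_pow_le
    (tendsto_pow_atTop_nhds_zero_of_lt_one c.2 (by exact_mod_cast hc))

section SpecRad

variable {r : ℕ} {A : Matrix (Fin r) (Fin r) ℂ}

theorem specRad_eq_sSup_norm_spectrum (A : Matrix (Fin r) (Fin r) ℂ) :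
    specRad A = sSup (norm '' spectrum ℂ A) := by
  have mem_spectrum_iff (z : ℂ) : z ∈ spectrum ℂ A ↔ ∃ v, v ≠ 0 ∧ A *ᵥ v = z • v := by
    rw [← spectrum_toLin', ← Module.End.hasEigenvalue_iff_mem_spectrum]
    refine ⟨fun hz => ?_, fun ⟨v, hv0, hv⟩ => ?_⟩
    · obtain ⟨v, hv⟩ := hz.exists_hasEigenvector
      exact ⟨v, hv.2, by simpa only [toLin'_apply] using hv.apply_eq_smul⟩
    · exact Module.End.hasEigenvalue_of_hasEigenvector
        ⟨Module.End.mem_eigenspace_iff.2 (by rwa [toLin'_apply]), hv0⟩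
  simp only [specRad, ← mem_spectrum_iff, Set.image, eq_comm]

theorem norm_le_specRad {z : ℂ} (hz : z ∈ spectrum ℂ A) : ‖z‖ ≤ specRad A := by
  rw [specRad_eq_sSup_norm_spectrum]
  exact le_csSup (A.finite_spectrum.image norm).bddAbove (Set.mem_image_of_mem norm hz)

theorem tendsto_matrix_pow_of_specRad_lt_one (hA : specRad A < 1) :
    Tendsto (fun n : ℕ => A ^ n) atTop (𝓝 0) := by
  cases isEmpty_or_nonempty (Fin r)
  · exact tendsto_const_nhds.congr fun n => Subsingleton.elim 0 (A ^ n)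
  let _ : NormedRing (Matrix (Fin r) (Fin r) ℂ) := Matrix.linftyOpNormedRing
  let _ : NormedAlgebra ℂ (Matrix (Fin r) (Fin r) ℂ) := Matrix.linftyOpNormedAlgebra
  have : CompleteSpace (Matrix (Fin r) (Fin r) ℂ) := FiniteDimensional.complete ℂ _
  refine tendsto_pow_atTop_nhds_zero_of_spectralRadius_lt_one ?_
  exact_mod_cast spectrum.spectralRadius_lt_of_forall_lt A (r := 1) fun z hz =>
    (norm_le_specRad hz).trans_lt hA

end SpecRad

/-! ### Weyl's criterion -/

section ContinuousMap

variable {X E : Type*} [TopologicalSpace X] [CompactSpace X] [MeasurableSpace X] [BorelSpace X]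
  [NormedAddCommGroup E]

theorem integrable_continuousMap (f : C(X, E)) (ν : Measure X) [IsFiniteMeasure ν] :
    Integrable f ν :=
  f.continuous.integrable_of_hasCompactSupport (.of_compactSpace f)

variable [NormedSpace ℝ E]

theorem lipschitzWith_one_integral_continuousMap (ν : Measure X) [IsProbabilityMeasure ν] :
    LipschitzWith 1 fun f : C(X, E) => ∫ x, f x ∂ν := by
  refine LipschitzWith.of_dist_le_mul fun f g => ?_
  rw [NNReal.coe_one, one_mul, dist_eq_norm, dist_eq_norm,
    ← integral_sub (integrable_continuousMap f ν) (integrable_continuousMap g ν)]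
  simpa using norm_integral_le_of_norm_le_const (μ := ν) (.of_forall (f - g).norm_coe_le_norm)

theorem isClosed_setOf_tendsto_integral {ι : Type*} {l : Filter ι} {μ : ι → Measure X}
    [∀ i, IsProbabilityMeasure (μ i)] (ν : Measure X) [IsProbabilityMeasure ν] :
    IsClosed {f : C(X, E) | Tendsto (fun i => ∫ x, f x ∂μ i) l (𝓝 (∫ x, f x ∂ν))} :=
  (LipschitzWith.uniformEquicontinuous _ 1 fun i =>
    lipschitzWith_one_integral_continuousMap (μ i)).equicontinuous.isClosed_setOfPred_tendsto
      (lipschitzWith_one_integral_continuousMap ν).continuous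

end ContinuousMap

section Weyl

variable {T : ℝ} [Fact (0 < T)]

theorem integral_fourier_haarAddCircle_s2 {m : ℤ} (hm : m ≠ 0) :
    ∫ x : AddCircle T, fourier m x ∂haarAddCircle = 0 :=
  integral_eq_zero_of_add_right_eq_neg (fourier_add_half_inv_index hm Fact.out)

variable {ι : Type*} {l : Filter ι} {μ : ι → Measure (AddCircle T)}

theorem tendsto_integral_add_right_sub
    (hμ : ∀ f : C(AddCircle T, ℝ),
      Tendsto (fun i => ∫ x, f x ∂μ i) l (𝓝 (∫ x, f x ∂haarAddCircle)))
    (f : C(AddCircle T, ℝ)) (a : AddCircle T) :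
    Tendsto (fun i => ∫ x, (f (x + a) - f x) ∂μ i) l (𝓝 0) := by
  let f' := f.comp (.addRight a)
  have integral_eq_zero : ∫ x, (f' - f) x ∂haarAddCircle = 0 := by
    have := integral_sub (integrable_continuousMap f' haarAddCircle)
      (integrable_continuousMap f haarAddCircle)
    exact this.trans (sub_eq_zero.2 (integral_add_right_eq_self f a))
  exact integral_eq_zero ▸ hμ (f' - f)

variable [∀ i, IsProbabilityMeasure (μ i)]

theorem tendsto_integral_of_tendsto_integral_fourier
    (hμ : ∀ m : ℤ, m ≠ 0 → Tendsto (fun i => ∫ x, fourier m x ∂μ i) l (𝓝 0))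
    (f : C(AddCircle T, ℂ)) :
    Tendsto (fun i => ∫ x, f x ∂μ i) l (𝓝 (∫ x, f x ∂haarAddCircle)) := by
  have hf : f ∈ closure (Submodule.span ℂ (Set.range (fourier (T := T))) : Set _) := by
    rw [← Submodule.topologicalClosure_coe, span_fourier_closure_eq_top]
    trivial
  refine closure_minimal (fun g hg => ?_) (isClosed_setOf_tendsto_integral haarAddCircle) hf
  induction hg using Submodule.span_induction with
  | mem g hg =>
    obtain ⟨m, rfl⟩ := hg
    rcases eq_or_ne m 0 with rfl | hm
    · simpa using tendsto_const_nhds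
    · simpa only [Set.mem_ofPred_eq, integral_fourier_haarAddCircle_s2 hm] using hμ m hm
  | zero => simpa using tendsto_const_nhds
  | add g g' _ _ hg hg' =>
    simpa [integral_add (integrable_continuousMap g _) (integrable_continuousMap g' _)]
      using hg.add hg'
  | smul c g _ hg => simpa [integral_const_mul] using hg.const_mul c

theorem tendsto_integral_real_of_tendsto_integral_fourier
    (hμ : ∀ m : ℤ, m ≠ 0 → Tendsto (fun i => ∫ x, fourier m x ∂μ i) l (𝓝 0))
    (f : C(AddCircle T, ℝ)) :
    Tendsto (fun i => ∫ x, f x ∂μ i) l (𝓝 (∫ x, f x ∂haarAddCircle)) := by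
  have h := tendsto_integral_of_tendsto_integral_fourier hμ
    ⟨fun x => (f x : ℂ), Complex.continuous_ofReal.comp f.continuous⟩
  simpa [Function.comp_def, integral_complex_ofReal] using (Complex.continuous_re.tendsto _).comp h

end Weyl

/-! ### The expectation of the sawtooth -/

theorem periodizedBernoulli_coe (k : ℕ) (x : ℝ) :
    periodizedBernoulli k (x : UnitAddCircle) = bernoulliFun k (Int.fract x) := by
  rw [← AddCircle.coe_fract, periodizedBernoulli,
    liftIco_zero_coe_apply ⟨Int.fract_nonneg x, Int.fract_lt_one x⟩]

theorem measurable_periodizedBernoulli (k : ℕ) : Measurable (periodizedBernoulli k) :=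
  (continuous_bernoulliFun k).measurable.comp
    (measurable_subtype_coe.comp (measurableEquivIco 1 0).measurable)

theorem norm_periodizedBernoulli_one_le (x : UnitAddCircle) :
    ‖periodizedBernoulli 1 x‖ ≤ 1 / 2 := by
  induction x using QuotientAddGroup.induction_on with | H x => ?_
  rw [periodizedBernoulli_coe, bernoulliFun_one, Real.norm_eq_abs, abs_le]
  constructor <;> linarith [Int.fract_nonneg x, Int.fract_lt_one x]

theorem bernoulliFun_two_fract_le (x : ℝ) : bernoulliFun 2 (Int.fract x) ≤ bernoulliFun 2 x := by
  have floor_mul_nonneg : 0 ≤ (⌊x⌋ : ℝ) * (2 * Int.fract x + ⌊x⌋ - 1) := by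
    rcases lt_trichotomy ⌊x⌋ 0 with h | h | h
    · have : (⌊x⌋ : ℝ) ≤ -1 := by exact_mod_cast Int.le_sub_one_of_lt h
      exact mul_nonneg_of_nonpos_of_nonpos (by linarith) (by linarith [Int.fract_lt_one x])
    · simp [h]
    · have : (1 : ℝ) ≤ ⌊x⌋ := by exact_mod_cast h
      exact mul_nonneg (by linarith) (by linarith [Int.fract_nonneg x])
  rw [bernoulliFun_two, bernoulliFun_two]
  nth_rw 3 4 [← Int.fract_add_floor x]
  linarith

theorem periodizedBernoulli_two_add_sub_le (t : UnitAddCircle) (h : ℝ) :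
    periodizedBernoulli 2 (t + h) - periodizedBernoulli 2 t
      ≤ 2 * h * periodizedBernoulli 1 t + h ^ 2 := by
  obtain ⟨x, hx, rfl⟩ : ∃ x ∈ Set.Ico (0 : ℝ) 1, (x : UnitAddCircle) = t :=
    ⟨_, by simpa using (equivIco 1 0 t).2, coe_equivIco⟩
  rw [← coe_add]
  simp only [periodizedBernoulli_coe, Int.fract_eq_self.2 hx]
  have := bernoulliFun_two_fract_le (x + h)
  simp only [bernoulliFun_one, bernoulliFun_two] at this ⊢
  linarith

theorem integral_periodizedBernoulli_two_add_sub_le (ν : Measure UnitAddCircle)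
    [IsProbabilityMeasure ν] (h : ℝ) :
    ∫ x, (periodizedBernoulli 2 (x + h) - periodizedBernoulli 2 x) ∂ν
      ≤ 2 * h * ∫ x, periodizedBernoulli 1 x ∂ν + h ^ 2 := by
  have hB₂ : Continuous (periodizedBernoulli 2) := periodizedBernoulli.continuous (by simp)
  have hB₂_sub : Continuous fun x : UnitAddCircle =>
      periodizedBernoulli 2 (x + h) - periodizedBernoulli 2 x := by fun_prop
  have hB₁ : Integrable (periodizedBernoulli 1) ν :=
    .of_bound (measurable_periodizedBernoulli 1).aestronglyMeasurable _
      (.of_forall norm_periodizedBernoulli_one_le)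
  calc
    _ ≤ ∫ x, (2 * h * periodizedBernoulli 1 x + h ^ 2) ∂ν :=
      integral_mono (integrable_continuousMap ⟨_, hB₂_sub⟩ ν)
        ((hB₁.const_mul _).add (integrable_const _))
        fun x => periodizedBernoulli_two_add_sub_le x h
    _ = 2 * h * ∫ x, periodizedBernoulli 1 x ∂ν + h ^ 2 := by
      rw [integral_add (hB₁.const_mul _) (integrable_const _), integral_const_mul,
        integral_const, probReal_univ, one_smul]

theorem tendsto_integral_periodizedBernoulli_one {ι : Type*} {l : Filter ι}
    {μ : ι → Measure UnitAddCircle} [∀ i, IsProbabilityMeasure (μ i)]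
    (hμ : ∀ f : C(UnitAddCircle, ℝ),
      Tendsto (fun i => ∫ x, f x ∂μ i) l (𝓝 (∫ x, f x ∂haarAddCircle))) :
    Tendsto (fun i => ∫ x, periodizedBernoulli 1 x ∂μ i) l (𝓝 0) := by
  have eventually_pos {h : ℝ} (hh : h ≠ 0) :
      ∀ᶠ i in l, 0 < h * (∫ x, periodizedBernoulli 1 x ∂μ i + h) := by
    have hB₂ : Tendsto
        (fun i => ∫ x, (periodizedBernoulli 2 (x + h) - periodizedBernoulli 2 x) ∂μ i) l (𝓝 0) :=
      tendsto_integral_add_right_sub hμ ⟨_, periodizedBernoulli.continuous (by simp)⟩ h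
    have neg_sq_lt : -h ^ 2 < 0 := neg_neg_of_pos (by positivity)
    filter_upwards [hB₂.eventually_const_lt neg_sq_lt] with i hi
    linarith [integral_periodizedBernoulli_two_add_sub_le (μ i) h]
  rw [Metric.tendsto_nhds]
  intro ε hε
  filter_upwards [eventually_pos hε.ne', eventually_pos (neg_ne_zero.2 hε.ne')] with i hpos hneg
  have lower := pos_of_mul_pos_right hpos hε.le
  have upper := neg_of_mul_pos_right hneg (neg_nonpos.2 hε.le)
  rw [dist_zero_right, Real.norm_eq_abs, abs_lt]
  constructor <;> linarith

/-! ### The logarithm of a random probability, modulo one -/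

section LogLaw

variable {ι : Type*} [Fintype ι] {q : ι → ℝ}

/-- The law of `log₂ q(X)` modulo `1`, for a random point `X` of distribution `q`. -/
noncomputable def logLaw (q : ι → ℝ) : Measure UnitAddCircle :=
  ∑ i, ENNReal.ofReal (q i) • Measure.dirac ((Real.logb 2 (q i) : ℝ) : UnitAddCircle)

theorem isProbabilityMeasure_logLaw (hq : ∀ i, 0 ≤ q i) (hq1 : ∑ i, q i = 1) :
    IsProbabilityMeasure (logLaw q) :=
  ⟨by simp [logLaw, ← ENNReal.ofReal_sum_of_nonneg fun i _ => hq i, hq1]⟩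

theorem integral_logLaw {E : Type*} [NormedAddCommGroup E] [NormedSpace ℝ E] [CompleteSpace E]
    (hq : ∀ i, 0 ≤ q i) (f : UnitAddCircle → E) :
    ∫ x, f x ∂logLaw q = ∑ i, q i • f (Real.logb 2 (q i) : ℝ) := by
  rw [logLaw, integral_finsetSum_measure fun i _ =>
    (integrable_dirac (by simp)).smul_measure ENNReal.ofReal_ne_top]
  simp only [integral_smul_measure, integral_dirac, ENNReal.toReal_ofReal (hq _)]

theorem vrho_neg_s2 (u : ℝ) : vrho (-u) = 1 / 2 + periodizedBernoulli 1 (u : UnitAddCircle) := by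
  rw [periodizedBernoulli_coe, bernoulliFun_one, vrho, Int.ceil_neg, Int.fract]
  push_cast
  ring

theorem sum_mul_vrho_neg_logb (hq : ∀ i, 0 ≤ q i) (hq1 : ∑ i, q i = 1) :
    ∑ i, q i * vrho (-Real.logb 2 (q i)) = 1 / 2 + ∫ x, periodizedBernoulli 1 x ∂logLaw q := by
  simp only [integral_logLaw hq, smul_eq_mul, vrho_neg_s2, mul_add, Finset.sum_add_distrib,
    ← Finset.sum_mul, hq1, one_mul]

/-- The multiplicative weight `q ↦ q · exp(-2πi m log₂ q)`: its values at the transition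
probabilities are the entries of `A_m`, and its sum over a distribution is the `(-m)`-th Fourier
integral of `logLaw`. -/
noncomputable def phase (m : ℤ) : ℝ →*₀ ℂ where
  toFun q := q * fourier (-m) ((Real.logb 2 q : ℝ) : UnitAddCircle)
  map_zero' := by simp
  map_one' := by simp
  map_mul' a b := by
    rcases eq_or_ne a 0 with rfl | ha
    · simp
    rcases eq_or_ne b 0 with rfl | hb
    · simp
    rw [Real.logb_mul ha hb, coe_add, fourier_apply, smul_add, toCircle_add]
    push_cast
    exact mul_mul_mul_comm _ _ _ _

theorem integral_fourier_neg_logLaw (hq : ∀ i, 0 ≤ q i) (m : ℤ) :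
    ∫ x, fourier (-m) x ∂logLaw q = ∑ i, phase m (q i) :=
  integral_logLaw hq _

end LogLaw

/-! ### Paths of a Markov source -/

theorem sum_path_eq_dotProduct_pow_mulVec_one {α R : Type*} [Fintype α] [DecidableEq α]
    [CommSemiring R] (A : Matrix α α R) (c : α → R) (n : ℕ) :
    ∑ x : Fin (n + 1) → α, c (x 0) * ∏ t : Fin n, A (x t.castSucc) (x t.succ)
      = c ⬝ᵥ (A ^ n *ᵥ 1) := by
  induction n generalizing c with
  | zero =>
    rw [← (Equiv.funUnique (Fin 1) α).symm.sum_comp]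
    simp [dotProduct]
  | succ n ih =>
    rw [← (Fin.consEquiv fun _ : Fin (n + 2) => α).sum_comp, Fintype.sum_prod_type]
    refine Finset.sum_congr rfl fun a _ => ?_
    rw [pow_succ', ← mulVec_mulVec, mulVec, ← ih (A a), Finset.mul_sum]
    refine Finset.sum_congr rfl fun x _ => ?_
    simp [Fin.consEquiv, Fin.prod_univ_succ]

section Markov

variable {r : ℕ} {p : Fin r → Fin r → ℝ} {pinit : Fin r → ℝ}

theorem markovProb_nonneg (hp : ∀ j k, 0 ≤ p j k) (hinit : ∀ j, 0 ≤ pinit j) {n : ℕ}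
    (x : Fin (n + 1) → Fin r) : 0 ≤ markovProb pinit p x :=
  mul_nonneg (hinit _) (Finset.prod_nonneg fun _ _ => hp _ _)

theorem sum_markovProb (hp : ∀ j k, 0 ≤ p j k) (hpsum : ∀ k, ∑ j, p j k = 1)
    (hinit : ∑ j, pinit j = 1) (n : ℕ) : ∑ x : Fin (n + 1) → Fin r, markovProb pinit p x = 1 := by
  have hP : (Pmat p)ᵀ ∈ rowStochastic ℝ (Fin r) :=
    mem_rowStochastic_iff_sum.2 ⟨fun k j => hp j k, hpsum⟩
  have h := sum_path_eq_dotProduct_pow_mulVec_one (Pmat p)ᵀ pinit n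
  rwa [one_vecMul_of_mem_rowStochastic (pow_mem hP n), dotProduct_one, hinit] at h

theorem Amat_apply (hp : ∀ j k, 0 ≤ p j k) (m : ℤ) (j k : Fin r) :
    Amat p m j k = phase m (p k j) := by
  rcases (hp k j).eq_or_lt with h | h
  · simp [Amat, ← h]
  · simp only [Amat, of_apply, if_pos h, phase, MonoidWithZeroHom.coe_mk, ZeroHom.coe_mk,
      fourier_coe_apply]
    push_cast
    ring_nf

theorem sum_phase_markovProb (hp : ∀ j k, 0 ≤ p j k) (m : ℤ) (n : ℕ) :
    ∑ x : Fin (n + 1) → Fin r, phase m (markovProb pinit p x)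
      = (phase m ∘ pinit) ⬝ᵥ (Amat p m ^ n *ᵥ 1) := by
  simp only [← sum_path_eq_dotProduct_pow_mulVec_one, markovProb, map_mul, map_prod,
    Amat_apply hp, Function.comp_apply]

theorem tendsto_integral_fourier_logLaw_markovProb (hp : ∀ j k, 0 ≤ p j k)
    (hinit : ∀ j, 0 ≤ pinit j) (hspec : ∀ m : ℕ, 0 < m → specRad (Amat p m) < 1) {m : ℤ}
    (hm : m ≠ 0) :
    Tendsto (fun n : ℕ => ∫ x, fourier m x ∂logLaw (markovProb (n := n) pinit p)) atTop (𝓝 0) := by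
  have tendsto_neg {k : ℕ} (hk : 0 < k) : Tendsto
      (fun n : ℕ => ∫ x, fourier (-k) x ∂logLaw (markovProb (n := n) pinit p)) atTop (𝓝 0) := by
    simp only [integral_fourier_neg_logLaw (markovProb_nonneg hp hinit), sum_phase_markovProb hp]
    have hcont : Continuous fun B : Matrix (Fin r) (Fin r) ℂ => (phase k ∘ pinit) ⬝ᵥ (B *ᵥ 1) := by
      fun_prop
    simpa [Function.comp_def] using
      (hcont.tendsto 0).comp (tendsto_matrix_pow_of_specRad_lt_one (hspec k hk))
  obtain ⟨k, rfl | rfl⟩ := m.eq_nat_or_neg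
  · have h := (Complex.continuous_conj.tendsto 0).comp (tendsto_neg (k := k) (by lia))
    simpa only [Function.comp_def, ← integral_conj, fourier_neg, Complex.conj_conj, map_zero]
      using h
  · exact tendsto_neg (by lia)

end Markov

theorem shannon_redundancy_convergent_mode_irreducible_aperiodic_general {r : ℕ}
    {p : Fin r → Fin r → ℝ} {pinit : Fin r → ℝ} (hpnn : ∀ j k, 0 ≤ p j k)
    (hpsum : ∀ k, ∑ j, p j k = 1) (hinit0 : ∀ j, 0 ≤ pinit j) (hinit1 : ∑ j, pinit j = 1)
    (hspec : ∀ m : ℕ, 0 < m → specRad (Amat p (m : ℤ)) < 1) :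
    Tendsto (fun n : ℕ => shannonRed r n pinit p) atTop (𝓝 (1 / 2)) := by
  have hnonneg (n : ℕ) := markovProb_nonneg hpnn hinit0 (n := n)
  have hsum := sum_markovProb hpnn hpsum hinit1
  have (n : ℕ) : IsProbabilityMeasure (logLaw (markovProb (n := n) pinit p)) :=
    isProbabilityMeasure_logLaw (hnonneg n) (hsum n)
  have equidistributed := tendsto_integral_real_of_tendsto_integral_fourier fun _ =>
    tendsto_integral_fourier_logLaw_markovProb hpnn hinit0 hspec
  simpa only [shannonRed, sum_mul_vrho_neg_logb (hnonneg _) (hsum _), add_zero] using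
    (tendsto_integral_periodizedBernoulli_one equidistributed).const_add (1 / 2)

theorem shannon_redundancy_convergent_mode_irreducible_aperiodic (r : ℕ)
    (p : Fin (r + 2) → Fin (r + 2) → ℝ) (pinit : Fin (r + 2) → ℝ)
    (hpnn : ∀ j k, 0 ≤ p j k) (hpsum : ∀ k, ∑ j, p j k = 1)
    (hinit0 : ∀ j, 0 ≤ pinit j) (hinit1 : ∑ j, pinit j = 1)
    (hirred : ∀ j k : Fin (r + 2), ∃ l : ℕ, 0 < l ∧ 0 < (Pmat p ^ l) j k)
    (haper : ∀ j : Fin (r + 2), ∀ d : ℕ,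
      (∀ n : ℕ, 0 < n → 0 < (Pmat p ^ n) j j → d ∣ n) → d ∣ 1)
    (hspec : ∀ m : ℕ, 0 < m → specRad (Amat p (m : ℤ)) < 1) :
    Filter.Tendsto (fun n : ℕ => shannonRed (r + 2) n pinit p)
      Filter.atTop (nhds (1 / 2)) := by
  exact shannon_redundancy_convergent_mode_irreducible_aperiodic_general hpnn hpsum hinit0 hinit1
    hspec
end

section
/- Let F = {f_{kj}} and G = {g_{kj}} be r×r matrices, where F is real, non-negative and irreducible, G is complex, and f_{kj} ≥ |g_{kj}| for all k,j ∈ {1,…,r}. Then the spectral radius satisfies ρ(G) ≤ ρ(F), with equality ρ(G) = ρ(F) if and only if there exist real numbers s and w₁,…,w_r such that G = e^{2πis}·D·F·D^{−1}, where D = diag(e^{2πiw₁},…,e^{2πiw_r}). -/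
/-!
If `G v = λ v`, then the vector `|v|` of moduli satisfies `|λ| |v| ≤ F |v|` entrywise. Iterating an
inequality `t y ≤ F y` with `y ≥ 0` non-zero gives `t ^ k ≤ ‖F ^ k‖`, hence `t ≤ ρ(F)` by Gelfand's
formula, and so `|λ| ≤ ρ(F)`.

If moreover `|λ| = ρ(F)`, irreducibility forces `F |v| = |λ| |v|`: a matrix `P > 0` commuting with
`F` would turn a non-strict inequality `t y ≤ F y`, `t y ≠ F y`, into one that is strict in every
entry, leaving room for some `t' > ρ(F)`. It also forces `|v| > 0`. Writing `v = D |v|` and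
`λ = c |λ|` with unimodular `D` and `c`, the matrix `H = c⁻¹ D⁻¹ G D` satisfies `|H| ≤ F` and
`H |v| = F |v|`, and the equality case of the triangle inequality gives `H = F`.
-/

open Matrix Filter Topology
open scoped ENNReal FourierTransform

section OrderedMatrix

variable {m n R : Type*} [Fintype n]

theorem mulVec_mono_of_nonneg [Semiring R] [PartialOrder R] [IsOrderedRing R]
    {A : Matrix m n R} (hA : ∀ i j, 0 ≤ A i j) : Monotone (A *ᵥ ·) :=
  fun _ _ hxy i => dotProduct_le_dotProduct_of_nonneg_left hxy (hA i)

theorem mulVec_apply_pos [Semiring R] [PartialOrder R] [IsStrictOrderedRing R] {A : Matrix m n R}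
    {y : n → R} {i : m} {j : n} (hA : ∀ k, 0 ≤ A i k) (hy : 0 ≤ y) (hAj : 0 < A i j)
    (hyj : 0 < y j) : 0 < (A *ᵥ y) i :=
  Finset.sum_pos' (fun k _ => mul_nonneg (hA k) (hy k)) ⟨j, Finset.mem_univ j, mul_pos hAj hyj⟩

theorem mulVec_pos_of_pos [Semiring R] [PartialOrder R] [IsStrictOrderedRing R] {A : Matrix m n R}
    (hA : ∀ i j, 0 < A i j) {y : n → R} (hy : 0 < y) (i : m) : 0 < (A *ᵥ y) i := by
  obtain ⟨hy_nonneg, j, hj⟩ := Pi.lt_def.mp hy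
  exact mulVec_apply_pos (fun k => (hA i k).le) hy_nonneg (hA i j) hj

theorem pow_smul_le_pow_mulVec [DecidableEq n] [CommSemiring R] [PartialOrder R] [IsOrderedRing R]
    {A : Matrix n n R} (hA : ∀ i j, 0 ≤ A i j) {t : R} (ht : 0 ≤ t) {y : n → R}
    (h : t • y ≤ A *ᵥ y) (k : ℕ) : t ^ k • y ≤ (A ^ k) *ᵥ y := by
  induction k with
  | zero => simp
  | succ k ih =>
    calc t ^ (k + 1) • y = t ^ k • t • y := by rw [pow_succ, mul_smul]
      _ ≤ t ^ k • (A *ᵥ y) := smul_le_smul_of_nonneg_left h (pow_nonneg ht k)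
      _ = A *ᵥ (t ^ k • y) := (mulVec_smul A (t ^ k) y).symm
      _ ≤ A *ᵥ ((A ^ k) *ᵥ y) := mulVec_mono_of_nonneg hA ih
      _ = (A ^ (k + 1)) *ᵥ y := by rw [mulVec_mulVec, ← pow_succ']

theorem pow_mulVec_of_mulVec_eq_smul [DecidableEq n] [CommSemiring R] {A : Matrix n n R} {t : R}
    {y : n → R} (h : A *ᵥ y = t • y) (k : ℕ) : (A ^ k) *ᵥ y = t ^ k • y := by
  induction k with
  | zero => simp
  | succ k ih => rw [pow_succ, ← mulVec_mulVec, h, mulVec_smul, ih, smul_smul, pow_succ']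

theorem exists_commute_pos_of_isIrreducible [Ring R] [LinearOrder R] [IsStrictOrderedRing R]
    {A : Matrix n n R} (hA : A.IsIrreducible) :
    ∃ P : Matrix n n R, Commute P A ∧ ∀ i j, 0 < P i j := by
  classical
  choose l _ hl using (isIrreducible_iff_exists_pow_pos hA.nonneg).mp hA
  refine ⟨∑ q : n × n, A ^ l q.1 q.2,
    Commute.sum_left _ _ _ fun q _ => (Commute.refl A).pow_left _, fun i j => ?_⟩
  rw [Matrix.sum_apply]
  exact Finset.sum_pos' (fun q _ => pow_apply_nonneg hA.nonneg _ i j)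
    ⟨(i, j), Finset.mem_univ _, hl i j⟩

theorem pos_of_isIrreducible_of_mulVec_eq_smul [CommRing R] [LinearOrder R] [IsStrictOrderedRing R]
    {A : Matrix n n R} (hA : A.IsIrreducible) {t : R} {y : n → R} (hy : 0 < y)
    (h : A *ᵥ y = t • y) (i : n) : 0 < y i := by
  classical
  obtain ⟨hy_nonneg, j, hj⟩ := Pi.lt_def.mp hy
  obtain ⟨l, -, hl⟩ := (isIrreducible_iff_exists_pow_pos hA.nonneg).mp hA i j
  have hpow : 0 < ((A ^ l) *ᵥ y) i :=
    mulVec_apply_pos (pow_apply_nonneg hA.nonneg l i) hy_nonneg hl hj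
  rw [pow_mulVec_of_mulVec_eq_smul h, Pi.smul_apply, smul_eq_mul] at hpow
  exact (hy_nonneg i).lt_of_ne' (right_ne_zero_of_mul hpow.ne')

theorem exists_gt_smul_le_mulVec [Field R] [LinearOrder R] [IsStrictOrderedRing R]
    {A : Matrix n n R} (hA : A.IsIrreducible) {t : R} {y : n → R} (hy : 0 ≤ y)
    (h : t • y < A *ᵥ y) : ∃ t' > t, ∃ z : n → R, 0 < z ∧ t' • z ≤ A *ᵥ z := by
  obtain ⟨P, hPA, hP⟩ := exists_commute_pos_of_isIrreducible hA
  have hy_ne : y ≠ 0 := by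
    rintro rfl
    simp at h
  have hz : ∀ i, 0 < (P *ᵥ y) i := mulVec_pos_of_pos hP (hy.lt_of_ne' hy_ne)
  have hstrict : ∀ i, t * (P *ᵥ y) i < (A *ᵥ (P *ᵥ y)) i := fun i => by
    have := mulVec_pos_of_pos hP (sub_pos.mpr h) i
    rwa [mulVec_sub, mulVec_smul, mulVec_mulVec, hPA.eq, ← mulVec_mulVec, Pi.sub_apply,
      sub_pos] at this
  obtain ⟨j, -⟩ := Function.ne_iff.mp hy_ne
  have : Nonempty n := ⟨j⟩
  obtain ⟨i₀, hi₀⟩ := Finite.exists_min fun i => (A *ᵥ (P *ᵥ y)) i / (P *ᵥ y) i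
  exact ⟨_, (lt_div_iff₀ (hz i₀)).mpr (hstrict i₀), P *ᵥ y,
    Pi.lt_def.mpr ⟨fun i => (hz i).le, j, hz j⟩, fun i => (le_div_iff₀ (hz i)).mp (hi₀ i)⟩

end OrderedMatrix

section SpectralRadius

theorem spectralRadius_units_smul {𝕜 A : Type*} [NormedField 𝕜] [Ring A] [Algebra 𝕜 A] (c : 𝕜ˣ)
    (a : A) : spectralRadius 𝕜 (c • a) = ‖(c : 𝕜)‖ₑ * spectralRadius 𝕜 a := by
  simp only [spectralRadius, spectrum.unit_smul_eq_smul, ← Set.image_smul, iSup_image,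
    Units.smul_def (α := 𝕜), smul_eq_mul, nnnorm_mul, ENNReal.coe_mul, ENNReal.mul_iSup,
    enorm_eq_nnnorm]

variable {n : Type*} [Fintype n] [DecidableEq n]

theorem mem_spectrum_iff_exists_mulVec_eq_smul {K : Type*} [Field K] {A : Matrix n n K} {μ : K} :
    μ ∈ spectrum K A ↔ ∃ v : n → K, v ≠ 0 ∧ A *ᵥ v = μ • v := by
  rw [← spectrum_toLin', ← Module.End.hasEigenvalue_iff_mem_spectrum]
  refine ⟨fun h => ?_, fun ⟨v, hv, h⟩ => ?_⟩
  · obtain ⟨v, hv⟩ := h.exists_hasEigenvector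
    exact ⟨v, hv.2, hv.apply_eq_smul⟩
  · exact Module.End.hasEigenvalue_of_hasEigenvector ⟨Module.End.mem_eigenspace_iff.mpr h, hv⟩

open scoped Matrix.Norms.Operator in
theorem exists_mem_spectrum_enorm_eq_spectralRadius [Nonempty n] (A : Matrix n n ℂ) :
    ∃ μ ∈ spectrum ℂ A, ‖μ‖ₑ = spectralRadius ℂ A :=
  spectrum.exists_nnnorm_eq_spectralRadius A

theorem spectralRadius_matrix_ne_top [Nonempty n] (A : Matrix n n ℂ) : spectralRadius ℂ A ≠ ∞ := by
  obtain ⟨μ, -, hμ⟩ := exists_mem_spectrum_enorm_eq_spectralRadius A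
  exact hμ ▸ enorm_ne_top

open scoped Matrix.Norms.Operator in
theorem le_linfty_opNorm_of_smul_le_mulVec {A : Matrix n n ℝ} {t : ℝ} (ht : 0 ≤ t) {y : n → ℝ}
    (hy : 0 < y) (h : t • y ≤ A *ᵥ y) : t ≤ ‖A‖ := by
  refine le_of_mul_le_mul_right ?_ (norm_pos_iff.mpr hy.ne')
  have hnonneg : 0 ≤ t • y := smul_nonneg ht hy.le
  calc t * ‖y‖ = ‖t • y‖ := by rw [norm_smul, Real.norm_of_nonneg ht]
    _ ≤ ‖A *ᵥ y‖ := (pi_norm_le_iff_of_nonneg (norm_nonneg _)).mpr fun i =>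
      (norm_le_norm_of_abs_le_abs (abs_le_abs_of_nonneg (hnonneg i) (h i))).trans
        (norm_le_pi_norm _ i)
    _ ≤ ‖A‖ * ‖y‖ := linfty_opNorm_mulVec A y

open scoped Matrix.Norms.Operator in
theorem ofReal_le_spectralRadius_of_smul_le_mulVec {A : Matrix n n ℝ} (hA : ∀ i j, 0 ≤ A i j)
    {t : ℝ} {y : n → ℝ} (hy : 0 < y) (h : t • y ≤ A *ᵥ y) :
    ENNReal.ofReal t ≤ spectralRadius ℂ (A.map fun a => (a : ℂ)) := by
  obtain ht | ht := le_total t 0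
  · simp [ENNReal.ofReal_of_nonpos ht]
  refine ge_of_tendsto (spectrum.pow_norm_pow_one_div_tendsto_nhds_spectralRadius _) ?_
  filter_upwards [eventually_ne_atTop 0] with k hk
  have hnorm : ‖(A.map fun a => (a : ℂ)) ^ k‖ = ‖A ^ k‖ := by
    have hmap : (A ^ k).map (fun a => (a : ℂ)) = (A.map fun a => (a : ℂ)) ^ k :=
      map_pow Complex.ofRealHom.mapMatrix A k
    simp [← hmap, linfty_opNorm_def]
  rw [hnorm]
  refine ENNReal.ofReal_le_ofReal ?_
  rw [one_div, Real.le_rpow_inv_iff_of_pos ht (norm_nonneg _) (by positivity), Real.rpow_natCast]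
  exact le_linfty_opNorm_of_smul_le_mulVec (pow_nonneg ht k) hy (pow_smul_le_pow_mulVec hA ht h k)

theorem mulVec_eq_smul_of_spectralRadius_le {A : Matrix n n ℝ} (hA : A.IsIrreducible) {t : ℝ}
    (ht : 0 ≤ t) (hρ : spectralRadius ℂ (A.map fun a => (a : ℂ)) ≤ ENNReal.ofReal t) {y : n → ℝ}
    (hy : 0 ≤ y) (h : t • y ≤ A *ᵥ y) : A *ᵥ y = t • y := by
  by_contra hne
  obtain ⟨t', ht', z, hz, hle⟩ := exists_gt_smul_le_mulVec hA hy (h.lt_of_ne' hne)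
  have := (ofReal_le_spectralRadius_of_smul_le_mulVec hA.nonneg hz hle).trans hρ
  exact ht'.not_ge ((ENNReal.ofReal_le_ofReal_iff ht).mp this)

end SpectralRadius

section Domination

variable {n : Type*} [Fintype n]

theorem norm_mulVec_le_mulVec_norm {m R : Type*} [NonUnitalSeminormedRing R] {F : Matrix m n ℝ}
    {G : Matrix m n R} (hFG : ∀ i j, ‖G i j‖ ≤ F i j) (v : n → R) (i : m) :
    ‖(G *ᵥ v) i‖ ≤ (F *ᵥ fun j => ‖v j‖) i :=
  (norm_sum_le _ _).trans <| Finset.sum_le_sum fun j _ =>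
    (norm_mul_le _ _).trans (mul_le_mul_of_nonneg_right (hFG i j) (norm_nonneg _))

theorem norm_smul_norm_le_mulVec_norm {R : Type*} [NormedDivisionRing R] {F : Matrix n n ℝ}
    {G : Matrix n n R} (hFG : ∀ i j, ‖G i j‖ ≤ F i j) {μ : R} {v : n → R} (hv : G *ᵥ v = μ • v) :
    (‖μ‖ • fun j => ‖v j‖) ≤ F *ᵥ fun j => ‖v j‖ := fun i => by
  simpa [hv] using norm_mulVec_le_mulVec_norm hFG v i

theorem norm_comp_pos {ι E : Type*} [NormedAddCommGroup E] {v : ι → E} (hv : v ≠ 0) :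
    0 < fun j => ‖v j‖ := by
  obtain ⟨j, hj⟩ := Function.ne_iff.mp hv
  exact Pi.lt_def.mpr ⟨fun _ => norm_nonneg _, j, norm_pos_iff.mpr hj⟩

theorem spectralRadius_le_of_norm_le [DecidableEq n] {F : Matrix n n ℝ} {G : Matrix n n ℂ}
    (hFG : ∀ i j, ‖G i j‖ ≤ F i j) :
    spectralRadius ℂ G ≤ spectralRadius ℂ (F.map fun a => (a : ℂ)) := by
  refine iSup₂_le fun μ hμ => ?_
  obtain ⟨v, hv, hGv⟩ := mem_spectrum_iff_exists_mulVec_eq_smul.mp hμ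
  rw [← enorm_eq_nnnorm, ← ofReal_norm]
  exact ofReal_le_spectralRadius_of_smul_le_mulVec (fun i j => (norm_nonneg _).trans (hFG i j))
    (norm_comp_pos hv) (norm_smul_norm_le_mulVec_norm hFG hGv)

end Domination

section Equality

theorem eq_ofReal_of_sum_mul_eq {ι 𝕜 : Type*} [Fintype ι] [RCLike 𝕜] {a : ι → 𝕜} {f u : ι → ℝ}
    (ha : ∀ j, ‖a j‖ ≤ f j) (hu : ∀ j, 0 < u j)
    (hsum : ∑ j, a j * (u j : 𝕜) = ((∑ j, f j * u j : ℝ) : 𝕜)) (j : ι) : a j = (f j : 𝕜) := by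
  have hle : ∀ j ∈ Finset.univ, RCLike.re (a j) * u j ≤ f j * u j := fun j _ =>
    mul_le_mul_of_nonneg_right ((RCLike.re_le_norm _).trans (ha j)) (hu j).le
  have hre_sum : ∑ j, RCLike.re (a j) * u j = ∑ j, f j * u j := by
    simpa [RCLike.re_mul_ofReal] using congrArg RCLike.re hsum
  have hre : RCLike.re (a j) = f j :=
    mul_right_cancel₀ (hu j).ne' <|
      (Finset.sum_eq_sum_iff_of_le hle).mp hre_sum j (Finset.mem_univ j)
  have hnorm : ‖a j‖ = f j := (ha j).antisymm (hre ▸ RCLike.re_le_norm _)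
  rw [← hnorm]
  exact RCLike.norm_le_re_iff_eq_norm.mp (hnorm.trans hre.symm).le

theorem exists_circle_mul_norm_eq (z : ℂ) : ∃ c : Circle, (c : ℂ) * ‖z‖ = z :=
  ⟨Circle.exp z.arg, by rw [Circle.coe_exp, mul_comm, Complex.norm_mul_exp_arg_mul_I]⟩

theorem fourierChar_surjective : Function.Surjective 𝐞 := fun c => by
  obtain ⟨x, rfl⟩ := Circle.exp_surjective c
  exact ⟨x / (2 * Real.pi), by rw [Real.fourierChar_apply', mul_div_cancel₀ _ (by positivity)]⟩

variable {n : Type*} [Fintype n] [DecidableEq n]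

/-- The matrix `c D A D⁻¹` with `D = diag(d)`, describing the case of equality of spectral radii.
The phases `c` and `d j` are elements of `Circle`, which makes unimodularity part of their type. -/
noncomputable def phaseConj (c : Circle) (d : n → Circle) (A : Matrix n n ℂ) : Matrix n n ℂ :=
  (c : ℂ) • (diagonal (fun j => (d j : ℂ)) * A * diagonal fun j => (d j : ℂ)⁻¹)

theorem phaseConj_apply (c : Circle) (d : n → Circle) (A : Matrix n n ℂ) (i j : n) :
    phaseConj c d A i j = c * (d i * A i j * (d j : ℂ)⁻¹) := by
  simp [phaseConj]

theorem spectralRadius_phaseConj (c : Circle) (d : n → Circle) (A : Matrix n n ℂ) :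
    spectralRadius ℂ (phaseConj c d A) = spectralRadius ℂ A := by
  let D : (Matrix n n ℂ)ˣ :=
    Units.map (diagonalRingHom n ℂ).toMonoidHom
      (MulEquiv.piUnits.symm fun j => Circle.toUnits (d j))
  have hconj : phaseConj c d A =
      Circle.toUnits c • ((D : Matrix n n ℂ) * A * (D⁻¹ : (Matrix n n ℂ)ˣ)) := rfl
  have hc : ‖(Circle.toUnits c : ℂ)‖ₑ = 1 := by
    rw [Circle.toUnits_apply, Units.val_mk0, ← ofReal_norm, Circle.norm_coe, ENNReal.ofReal_one]
  rw [hconj, spectralRadius_units_smul, hc, one_mul, spectralRadius, spectrum.units_conjugate,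
    spectralRadius]

theorem eq_phaseConj_of_mulVec_eq {F : Matrix n n ℝ} {G : Matrix n n ℂ}
    (hFG : ∀ i j, ‖G i j‖ ≤ F i j) {u : n → ℝ} (hu : ∀ j, 0 < u j) {c : Circle} {d : n → Circle}
    (h : ∀ i, (G *ᵥ fun j => (d j : ℂ) * u j) i = c * d i * ((F *ᵥ u) i : ℝ)) :
    G = phaseConj c d (F.map fun a => (a : ℂ)) := by
  ext i j
  have hrow : (c * d i : ℂ)⁻¹ * G i j * d j = F i j := by
    refine eq_ofReal_of_sum_mul_eq (a := fun j => (c * d i : ℂ)⁻¹ * G i j * d j) (f := F i)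
      (by simpa [Circle.norm_coe] using hFG i) hu ?_ j
    calc ∑ j, (c * d i : ℂ)⁻¹ * G i j * d j * u j
        = (c * d i : ℂ)⁻¹ * (G *ᵥ fun j => (d j : ℂ) * u j) i := by
          simp only [mulVec, dotProduct, Finset.mul_sum, mul_assoc]
      _ = ((F *ᵥ u) i : ℝ) := by rw [h, inv_mul_cancel_left₀ (by simp)]
  rw [phaseConj_apply, map_apply, ← hrow]
  field_simp [Circle.coe_ne_zero]

theorem spectralRadius_eq_iff_exists_phaseConj [Nonempty n] {F : Matrix n n ℝ} {G : Matrix n n ℂ}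
    (hF : F.IsIrreducible) (hFG : ∀ i j, ‖G i j‖ ≤ F i j) :
    spectralRadius ℂ G = spectralRadius ℂ (F.map fun a => (a : ℂ)) ↔
      ∃ (c : Circle) (d : n → Circle), G = phaseConj c d (F.map fun a => (a : ℂ)) := by
  refine ⟨fun hρ => ?_, fun ⟨c, d, hG⟩ => hG ▸ spectralRadius_phaseConj c d _⟩
  obtain ⟨μ, hμ, hμρ⟩ := exists_mem_spectrum_enorm_eq_spectralRadius G
  obtain ⟨v, hv, hGv⟩ := mem_spectrum_iff_exists_mulVec_eq_smul.mp hμ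
  have hFv : (F *ᵥ fun j => ‖v j‖) = ‖μ‖ • fun j => ‖v j‖ :=
    mulVec_eq_smul_of_spectralRadius_le hF (norm_nonneg μ) (by rw [ofReal_norm, hμρ, hρ])
      (norm_comp_pos hv).le (norm_smul_norm_le_mulVec_norm hFG hGv)
  obtain ⟨c, hc⟩ := exists_circle_mul_norm_eq μ
  choose d hd using fun j => exists_circle_mul_norm_eq (v j)
  refine ⟨c, d, eq_phaseConj_of_mulVec_eq hFG
    (pos_of_isIrreducible_of_mulVec_eq_smul hF (norm_comp_pos hv) hFv) fun i => ?_⟩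
  calc (G *ᵥ fun j => (d j : ℂ) * ‖v j‖) i
    _ = μ * v i := by simp only [hd, hGv, Pi.smul_apply, smul_eq_mul]
    _ = (c * ‖μ‖) * (d i * ‖v i‖) := by rw [hc, hd]
    _ = c * d i * ((F *ᵥ fun j => ‖v j‖) i : ℝ) := by
      rw [hFv, Pi.smul_apply, smul_eq_mul, Complex.ofReal_mul]
      ring

theorem phaseConj_fourierChar (s : ℝ) (w : n → ℝ) (A : Matrix n n ℂ) :
    phaseConj (𝐞 s) (fun j => 𝐞 (w j)) A =
      Complex.exp (2 * Real.pi * Complex.I * s) •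
        (diagonal (fun j => Complex.exp (2 * Real.pi * Complex.I * w j)) * A *
          diagonal fun j => Complex.exp (-(2 * Real.pi * Complex.I * w j))) := by
  have hexp : ∀ x : ℝ, (𝐞 x : ℂ) = Complex.exp (2 * Real.pi * Complex.I * x) := fun x => by
    rw [Real.fourierChar_apply]
    push_cast
    ring_nf
  simp only [phaseConj, hexp, Complex.exp_neg]

end Equality

theorem specRad_eq_toReal_spectralRadius {r : ℕ} [NeZero r] (A : Matrix (Fin r) (Fin r) ℂ) :
    specRad A = (spectralRadius ℂ A).toReal := by
  obtain ⟨μ, hμ, hμρ⟩ := exists_mem_spectrum_enorm_eq_spectralRadius A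
  rw [← hμρ, toReal_enorm]
  refine IsGreatest.csSup_eq ⟨⟨μ, mem_spectrum_iff_exists_mulVec_eq_smul.mp hμ, rfl⟩, ?_⟩
  rintro _ ⟨lam, hlam, rfl⟩
  rw [← enorm_le_iff_norm_le, hμρ]
  exact le_iSup₂_of_le lam (mem_spectrum_iff_exists_mulVec_eq_smul.mpr hlam) le_rfl

theorem spectral_radius_domination (r : ℕ) (hr : 0 < r)
    (F : Matrix (Fin r) (Fin r) ℝ) (G : Matrix (Fin r) (Fin r) ℂ)
    (hF0 : ∀ k j, 0 ≤ F k j)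
    (hFirr : ∀ k j : Fin r, ∃ l : ℕ, 0 < l ∧ 0 < (F ^ l) k j)
    (hdom : ∀ k j, ‖G k j‖ ≤ F k j) :
    specRad G ≤ specRad (F.map (fun a => (a : ℂ))) ∧
    (specRad G = specRad (F.map (fun a => (a : ℂ))) ↔
      ∃ (s : ℝ) (w : Fin r → ℝ),
        G = Complex.exp (2 * (Real.pi : ℂ) * Complex.I * (s : ℂ)) •
          (Matrix.diagonal (fun j => Complex.exp (2 * (Real.pi : ℂ) * Complex.I * ((w j : ℝ) : ℂ))) *
            F.map (fun a => (a : ℂ)) *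
            Matrix.diagonal (fun j => Complex.exp (-(2 * (Real.pi : ℂ) * Complex.I * ((w j : ℝ) : ℂ)))))) := by
  have : NeZero r := ⟨hr.ne'⟩
  have hF : F.IsIrreducible := (isIrreducible_iff_exists_pow_pos hF0).mpr hFirr
  have hfinite := spectralRadius_matrix_ne_top (n := Fin r)
  simp only [specRad_eq_toReal_spectralRadius, ENNReal.toReal_le_toReal, hfinite, ne_eq,
    not_false_eq_true, ENNReal.toReal_eq_toReal_iff', ← phaseConj_fourierChar]
  exact ⟨spectralRadius_le_of_norm_le hdom,
    (spectralRadius_eq_iff_exists_phaseConj hF hdom).trans <|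
      fourierChar_surjective.exists.trans <|
        exists_congr fun _ => fourierChar_surjective.comp_left.exists⟩
end

section
/- Let the transition matrix {p(j|k)} be strictly positive, let all initial probabilities p_j be strictly positive, and let M be a positive integer such that M·α_{jk} ∈ ℤ for all j,k ∈ {1,…,r}. Then for every n ≥ 1 and every string xⁿ = (x₁,…,xₙ) ∈ {1,…,r}ⁿ, the fractional part of −M·log μ(xⁿ) equals the fractional part of ζ_{x₁ xₙ}(n); in particular it depends on xⁿ only through x₁ and xₙ. -/
/-!
Work in `ℝ / ℤ` with `c j k = -M log p(j|k)`. Integrality of `M α_{jk}` says that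
`c j 1 + c j j = c k 1 + c j k`; taking `k = 1` gives `c j j = c 1 1`, so that
`c j k = c 1 1 + (c j 1 - c k 1)` is a constant plus a coboundary. Summed along a string the
coboundary telescopes, leaving the number of transitions and the two end symbols.
-/

section PathSum

variable {S G : Type*} [AddCommGroup G]

theorem sum_fin_succ_sub_castSucc {n : ℕ} (f : Fin (n + 1) → G) :
    ∑ t : Fin n, (f t.succ - f t.castSucc) = f (Fin.last n) - f 0 := by
  rw [Finset.sum_sub_distrib, sub_eq_sub_iff_add_eq_add, add_comm, ← Fin.sum_univ_succ,
    Fin.sum_univ_castSucc, add_comm]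

theorem eq_const_add_coboundary {c : S → S → G} {o : S}
    (hc : ∀ j k, c j o + c j j = c k o + c j k) (j k : S) :
    c j k = c o o + (c j o - c k o) := by
  have diagonal_const : c j j = c o o :=
    add_left_cancel ((hc j o).trans (add_comm _ _))
  calc c j k = c j o + c j j - c k o := eq_sub_of_add_eq' (hc j k).symm
    _ = c o o + (c j o - c k o) := by rw [diagonal_const]; abel

theorem sum_path_eq_of_eq_const_add_coboundary {c : S → S → G} {a : G} {f : S → G}
    (hc : ∀ j k, c j k = a + (f j - f k)) {n : ℕ} (x : Fin (n + 1) → S) :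
    ∑ t : Fin n, c (x t.succ) (x t.castSucc) = n • a + (f (x (Fin.last n)) - f (x 0)) := by
  simp only [hc, Finset.sum_add_distrib, Fin.sum_const]
  rw [sum_fin_succ_sub_castSucc fun t => f (x t)]

end PathSum

theorem fract_eq_fract_iff_coe_unitAddCircle_eq {a b : ℝ} :
    Int.fract a = Int.fract b ↔ (a : UnitAddCircle) = b := by
  rw [Int.fract_eq_fract, ← sub_eq_zero, ← AddCircle.coe_sub, AddCircle.coe_eq_zero_iff]
  simp only [zsmul_one, eq_comm]

/-- The class of `-M log₂ y` in `ℝ / ℤ`. It determines `⟨-M log₂ y⟩` and is determined by it, but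
lives in a group, where products of probabilities become sums. -/
noncomputable def logPhase (M y : ℝ) : UnitAddCircle :=
  ((-M * Real.logb 2 y : ℝ) : UnitAddCircle)

section LogPhase

variable (M : ℝ) {y z : ℝ}

theorem logPhase_mul (hy : y ≠ 0) (hz : z ≠ 0) :
    logPhase M (y * z) = logPhase M y + logPhase M z := by
  rw [logPhase, Real.logb_mul hy hz, mul_add, AddCircle.coe_add, logPhase, logPhase]

theorem logPhase_div (hy : y ≠ 0) (hz : z ≠ 0) :
    logPhase M (y / z) = logPhase M y - logPhase M z := by
  rw [logPhase, Real.logb_div hy hz, mul_sub, AddCircle.coe_sub, logPhase, logPhase]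

theorem logPhase_prod {ι : Type*} (s : Finset ι) {f : ι → ℝ} (hf : ∀ i ∈ s, f i ≠ 0) :
    logPhase M (∏ i ∈ s, f i) = ∑ i ∈ s, logPhase M (f i) := by
  rw [logPhase, Real.logb_prod s f hf, Finset.mul_sum]
  exact map_sum (QuotientAddGroup.mk' (AddSubgroup.zmultiples (1 : ℝ))) _ s

theorem logPhase_eq_zero_iff : logPhase M y = 0 ↔ ∃ m : ℤ, M * Real.logb 2 y = m := by
  rw [logPhase, neg_mul, AddCircle.coe_neg, neg_eq_zero, AddCircle.coe_eq_zero_iff]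
  simp only [zsmul_one, eq_comm]

end LogPhase

section TransitionWeights

variable {S : Type*} {o : S} {w : S → S → ℝ} {M : ℝ}

theorem logPhase_eq_const_add_coboundary (hw : ∀ j k, w j k ≠ 0)
    (hM : ∀ j k, ∃ m : ℤ, M * Real.logb 2 (w j o * w j j / (w k o * w j k)) = m) (j k : S) :
    logPhase M (w j k) =
      logPhase M (w o o) + (logPhase M (w j o) - logPhase M (w k o)) := by
  refine eq_const_add_coboundary (c := fun j k => logPhase M (w j k)) (fun j k => ?_) j k
  rw [← sub_eq_zero, ← logPhase_mul M (hw _ _) (hw _ _), ← logPhase_mul M (hw _ _) (hw _ _),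
    ← logPhase_div M (mul_ne_zero (hw _ _) (hw _ _)) (mul_ne_zero (hw _ _) (hw _ _))]
  exact (logPhase_eq_zero_iff M).mpr (hM j k)

theorem logPhase_prod_transitions (hw : ∀ j k, w j k ≠ 0)
    (hM : ∀ j k, ∃ m : ℤ, M * Real.logb 2 (w j o * w j j / (w k o * w j k)) = m)
    {n : ℕ} (x : Fin (n + 1) → S) :
    logPhase M (∏ t : Fin n, w (x t.succ) (x t.castSucc)) =
      n • logPhase M (w o o) +
        (logPhase M (w (x (Fin.last n)) o) - logPhase M (w (x 0) o)) := by
  rw [logPhase_prod M _ fun _ _ => hw _ _]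
  exact sum_path_eq_of_eq_const_add_coboundary (c := fun j k => logPhase M (w j k))
    (f := fun j => logPhase M (w j o)) (logPhase_eq_const_add_coboundary hw hM) x

end TransitionWeights

theorem fract_log_prob_depends_on_endpoints_general {S : Type*} {o : S} {w : S → S → ℝ}
    {v : S → ℝ} {M : ℝ} (hw : ∀ j k, 0 < w j k)
    (hM : ∀ j k, ∃ m : ℤ, M * Real.logb 2 (w j o * w j j / (w k o * w j k)) = m)
    {n : ℕ} (x : Fin (n + 1) → S) (hv : 0 < v (x 0)) :
    Int.fract (-M * Real.logb 2 (v (x 0) * ∏ t : Fin n, w (x t.succ) (x t.castSucc))) =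
      Int.fract (M * (-(n : ℝ) * Real.logb 2 (w o o) + Real.logb 2 (w (x 0) o)
        - Real.logb 2 (w (x (Fin.last n)) o) - Real.logb 2 (v (x 0)))) := by
  rw [fract_eq_fract_iff_coe_unitAddCircle_eq]
  calc logPhase M (v (x 0) * ∏ t : Fin n, w (x t.succ) (x t.castSucc))
      = logPhase M (v (x 0)) + (n • logPhase M (w o o) +
          (logPhase M (w (x (Fin.last n)) o) - logPhase M (w (x 0) o))) := by
        rw [logPhase_mul M hv.ne' (Finset.prod_ne_zero_iff.mpr fun _ _ => (hw _ _).ne'),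
          logPhase_prod_transitions (fun j k => (hw j k).ne') hM]
    _ = _ := by
        simp only [logPhase, ← AddCircle.coe_nsmul, ← AddCircle.coe_sub, ← AddCircle.coe_add]
        congr 1
        rw [nsmul_eq_mul]
        ring

theorem fract_log_prob_depends_on_endpoints (r : ℕ)
    (p : Fin (r + 2) → Fin (r + 2) → ℝ) (pinit : Fin (r + 2) → ℝ)
    (hppos : ∀ j k, 0 < p j k) (hpsum : ∀ k, ∑ j, p j k = 1)
    (hinitpos : ∀ j, 0 < pinit j) (hinit1 : ∑ j, pinit j = 1)
    (M : ℕ) (hM : 0 < M)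
    (hMint : ∀ j k, ∃ z : ℤ, (M : ℝ) * alphaJK p j k = (z : ℝ)) :
    ∀ (n : ℕ) (x : Fin (n + 1) → Fin (r + 2)),
      Int.fract (-(M : ℝ) * Real.logb 2 (markovProb pinit p x)) =
        Int.fract (zetaJK p pinit M (x 0) (x (Fin.last n)) (n + 1)) := by
  intro n x
  simpa only [markovProb, zetaJK, Nat.cast_add_one, add_sub_cancel_right] using
    fract_log_prob_depends_on_endpoints_general hppos hMint x (hinitpos (x 0))
end

section
/- Let θ > 0, let N be a positive integer, and let f: ℝ → ℝ be a 1-periodic function satisfying |f(u) − f(v)| ≤ |u − v|/θ for all u,v ∈ ℝ and |f(u) − f(v)| ≤ 1 for all u,v ∈ ℝ. Let f̂_m = ∫₀¹ f(t)·e^{−2πimt} dt be the Fourier coefficients of f and let {f}_N(u) = Σ_{m=−N}^{N} f̂_m·(1 − |m|/(N+1))·e^{2πimu} be the N-th Fejér (Cesàro) mean of its Fourier series. Then for every u ∈ ℝ and every δ ∈ (0, 1/2), |f(u) − {f}_N(u)| ≤ δ/θ + 1/(N·sin²(πδ)). -/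
/-!
The Fejér mean is the convolution of `f` with the Fejér kernel `|∑_{j ≤ N} e_j|² / (N + 1)`, whose
`m`-th Fourier coefficient `1 - |m| / (N + 1)` counts the pairs `(j, k)` with `j - k = m`. The
kernel is nonnegative and has mean one, so `f x - {f}_N x` is the average of `f x - f y` over `y`,
weighted by the kernel centred at `x`. The points within `δ` of `x` contribute at most the
oscillation of `f` there; at the others the kernel is at most `1 / ((N + 1) sin² (πδ / T))`, by the
closed form of the geometric sum.
-/

open Finset MeasureTheory AddCircle
open scoped NNReal Real

lemma card_filter_range_product_sub_eq (N : ℕ) (m : ℤ) :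
    #{p ∈ range (N + 1) ×ˢ range (N + 1) | (p.1 : ℤ) - p.2 = m} = N + 1 - m.natAbs := by
  rw [← card_range (N + 1 - m.natAbs)]
  refine card_nbij' (fun p => min p.1 p.2) (fun i => (i + m.toNat, i + (-m).toNat)) ?_ ?_ ?_ ?_
  all_goals
    simp only [Set.MapsTo, Set.LeftInvOn, coe_filter, mem_product, mem_range, coe_range,
      Set.mem_ofPred_eq, Set.mem_Iio, Prod.forall, Prod.mk.injEq]
    omega

lemma sum_range_sum_range_sub {M : Type*} [AddCommMonoid M] (g : ℤ → M) (N : ℕ) :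
    ∑ j ∈ range (N + 1), ∑ k ∈ range (N + 1), g (j - k) =
      ∑ m ∈ Icc (-N : ℤ) N, (N + 1 - m.natAbs) • g m := by
  have hmaps : ∀ p ∈ range (N + 1) ×ˢ range (N + 1), (p.1 : ℤ) - p.2 ∈ Icc (-N : ℤ) N := by
    simp only [mem_product, mem_range, mem_Icc]
    omega
  rw [← sum_product', ← sum_fiberwise_of_maps_to hmaps]
  refine sum_congr rfl fun m _ => ?_
  rw [← card_filter_range_product_sub_eq, ← sum_const]
  exact sum_congr rfl fun p hp => congrArg g (mem_filter.mp hp).2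

section AddCircle

variable {T : ℝ}

lemma exists_coe_eq_and_abs_eq_norm (x : AddCircle T) :
    ∃ r : ℝ, (r : AddCircle T) = x ∧ |r| = ‖x‖ := by
  induction x using QuotientAddGroup.induction_on with
  | H r =>
    refine ⟨r - round (T⁻¹ * r) * T, ?_, (AddCircle.norm_eq T).symm⟩
    rw [AddCircle.coe_sub, ← zsmul_eq_mul, AddCircle.coe_zsmul, AddCircle.coe_period, smul_zero,
      sub_zero]

lemma lipschitzWith_periodic_lift {α : Type*} [PseudoMetricSpace α] {f : ℝ → α} {K : ℝ≥0}
    (hf : LipschitzWith K f) (hper : Function.Periodic f T) : LipschitzWith K hper.lift := by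
  refine LipschitzWith.of_dist_le_mul fun x y => ?_
  obtain ⟨b, rfl⟩ := QuotientAddGroup.mk_surjective y
  obtain ⟨r, hr, hnorm⟩ := exists_coe_eq_and_abs_eq_norm (x - (b : AddCircle T))
  obtain rfl : ((b + r : ℝ) : AddCircle T) = x := by rw [AddCircle.coe_add, hr, add_sub_cancel]
  calc dist (f (b + r)) (f b) ≤ K * dist (b + r) b := hf.dist_le_mul _ _
    _ = K * dist ((b + r : ℝ) : AddCircle T) b := by
      rw [dist_eq_norm _ (b : AddCircle T), ← hnorm, dist_self_add_left, Real.norm_eq_abs]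

lemma fourier_natCast (j : ℕ) (x : AddCircle T) : fourier (j : ℤ) x = fourier 1 x ^ j := by
  simp only [fourier_apply, one_zsmul, natCast_zsmul, toCircle_nsmul, Circle.coe_pow]

lemma norm_fourier_apply (n : ℤ) (x : AddCircle T) : ‖fourier n x‖ = 1 := by
  rw [fourier_apply, Circle.norm_coe]

lemma norm_fourier_one_sub_one (x : AddCircle T) :
    ‖fourier 1 x - 1‖ = 2 * |Real.sin (π * ‖x‖ / T)| := by
  obtain ⟨r, rfl, hr⟩ := exists_coe_eq_and_abs_eq_norm x
  have hexp : fourier 1 (r : AddCircle T) = Complex.exp (Complex.I * (2 * (π * r / T) : ℝ)) := by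
    rw [fourier_coe_apply]
    congr 1
    push_cast
    ring
  rw [hexp, Complex.norm_exp_I_mul_ofReal_sub_one, mul_div_cancel_left₀ _ two_ne_zero, norm_mul,
    Real.norm_two, Real.norm_eq_abs, ← hr]
  rcases abs_choice r with h | h <;> rw [h]
  rw [mul_neg, neg_div, Real.sin_neg, abs_neg]

lemma fourier_sub_apply (n : ℤ) (x y : AddCircle T) :
    fourier n (x - y) = fourier n x * fourier (-n) y := by
  rw [fourier_apply, zsmul_sub, sub_eq_add_neg, ← neg_zsmul, toCircle_add, Circle.coe_mul,
    ← fourier_apply, ← fourier_apply]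

variable [Fact (0 < T)]

lemma integral_fourier (n : ℤ) :
    ∫ x : AddCircle T, fourier n x ∂haarAddCircle = if n = 0 then 1 else 0 := by
  have h := congrFun (fourierCoeff_fourier (T := T) n) 0
  simpa only [fourierCoeff, neg_zero, fourier_zero, one_smul, Pi.single_apply, eq_comm] using h

end AddCircle

section FejerKernel

variable {T : ℝ}

/-- The Fejér kernel of order `N` on the circle of length `T`, written so that its nonnegativity is
evident; `ofReal_fejerKernel` gives its expansion as a trigonometric polynomial. -/
noncomputable def fejerKernel (N : ℕ) (x : AddCircle T) : ℝ :=
  ‖∑ j ∈ range (N + 1), fourier (j : ℤ) x‖ ^ 2 / (N + 1)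

lemma fejerKernel_nonneg (N : ℕ) (x : AddCircle T) : 0 ≤ fejerKernel N x := by
  unfold fejerKernel
  positivity

lemma continuous_fejerKernel (N : ℕ) : Continuous (fejerKernel N : AddCircle T → ℝ) := by
  unfold fejerKernel
  fun_prop

lemma continuous_fejerKernel_sub (N : ℕ) (x : AddCircle T) :
    Continuous fun y => fejerKernel N (x - y) :=
  (continuous_fejerKernel N).comp (continuous_const.sub continuous_id)

lemma ofReal_fejerKernel (N : ℕ) (x : AddCircle T) :
    (fejerKernel N x : ℂ) =
      ∑ m ∈ Icc (-N : ℤ) N, ((1 - |(m : ℝ)| / (N + 1) : ℝ) : ℂ) * fourier m x := by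
  have hmul (j k : ℤ) : fourier j x * starRingEnd ℂ (fourier k x) = fourier (j - k) x := by
    rw [← fourier_neg, ← fourier_add, sub_eq_add_neg]
  have hN : (N : ℂ) + 1 ≠ 0 := Nat.cast_add_one_ne_zero N
  rw [fejerKernel, Complex.ofReal_div, Complex.ofReal_pow, ← Complex.mul_conj', map_sum,
    sum_mul_sum]
  simp only [hmul]
  rw [sum_range_sum_range_sub (fun m => fourier m x), sum_div]
  refine sum_congr rfl fun m hm => ?_
  have hle : m.natAbs ≤ N + 1 := by
    rw [mem_Icc] at hm
    omega
  have habs : (m.natAbs : ℂ) = (|(m : ℝ)| : ℝ) := by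
    rw [← Complex.ofReal_natCast, Nat.cast_natAbs, Int.cast_abs]
  rw [nsmul_eq_mul, Nat.cast_sub hle, habs]
  push_cast
  field_simp

lemma fejerKernel_mul_sin_sq_le_one (N : ℕ) (x : AddCircle T) :
    fejerKernel N x * ((N + 1) * Real.sin (π * ‖x‖ / T) ^ 2) ≤ 1 := by
  have hgeom : ‖∑ j ∈ range (N + 1), fourier (j : ℤ) x‖ * (2 * |Real.sin (π * ‖x‖ / T)|) ≤ 2 :=
    calc _ = ‖fourier ((N + 1 : ℕ) : ℤ) x - 1‖ := by
          simp only [← norm_fourier_one_sub_one, fourier_natCast, ← norm_mul, geom_sum_mul]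
      _ ≤ ‖fourier ((N + 1 : ℕ) : ℤ) x‖ + ‖(1 : ℂ)‖ := norm_sub_le _ _
      _ = 2 := by rw [norm_fourier_apply, norm_one, one_add_one_eq_two]
  calc fejerKernel N x * ((N + 1) * Real.sin (π * ‖x‖ / T) ^ 2)
      = (‖∑ j ∈ range (N + 1), fourier (j : ℤ) x‖ * |Real.sin (π * ‖x‖ / T)|) ^ 2 := by
        rw [fejerKernel, mul_pow, sq_abs]
        field_simp
    _ ≤ 1 := pow_le_one₀ (by positivity) (by linarith)

variable [Fact (0 < T)]

lemma integral_fejerKernel (N : ℕ) :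
    ∫ x : AddCircle T, fejerKernel N x ∂haarAddCircle = 1 := by
  have hint (m : ℤ) : Integrable (fourier m : AddCircle T → ℂ) haarAddCircle :=
    (map_continuous (fourier m)).integrable_of_hasCompactSupport (.of_compactSpace _)
  rw [← Complex.ofReal_inj, ← integral_complex_ofReal]
  simp only [ofReal_fejerKernel]
  rw [integral_finsetSum _ fun m _ => (hint m).const_mul _]
  simp only [integral_const_mul, integral_fourier, mul_ite, mul_one, mul_zero, sum_ite_eq']
  simp

lemma integrable_fejerKernel_sub (N : ℕ) (x : AddCircle T) :
    Integrable (fun y => fejerKernel N (x - y)) haarAddCircle :=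
  (continuous_fejerKernel_sub N x).integrable_of_hasCompactSupport (.of_compactSpace _)

lemma integral_fejerKernel_sub (N : ℕ) (x : AddCircle T) :
    ∫ y, fejerKernel N (x - y) ∂haarAddCircle = 1 := by
  rw [integral_sub_left_eq_self (fejerKernel N), integral_fejerKernel]

lemma fejerKernel_le_of_le_norm (N : ℕ) {δ : ℝ} (hδ : 0 < δ) {x : AddCircle T} (hx : δ ≤ ‖x‖) :
    fejerKernel N x ≤ 1 / ((N + 1) * Real.sin (π * δ / T) ^ 2) := by
  have hT : 0 < T := Fact.out
  have hhalf : ‖x‖ ≤ T / 2 := by simpa only [abs_of_pos hT] using norm_le_half_period T hT.ne'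
  have hδ_le : π * δ / T ≤ π * ‖x‖ / T := by gcongr
  have hx_le : π * ‖x‖ / T ≤ π / 2 := by
    rw [div_le_iff₀ hT]
    nlinarith [Real.pi_pos]
  have hδ_pos : 0 < π * δ / T := by positivity
  have hsin_pos : 0 < Real.sin (π * δ / T) :=
    Real.sin_pos_of_pos_of_lt_pi hδ_pos (by linarith [Real.pi_pos])
  have hsin_le : Real.sin (π * δ / T) ≤ Real.sin (π * ‖x‖ / T) :=
    Real.sin_le_sin_of_le_of_le_pi_div_two (by linarith [Real.pi_pos]) hx_le hδ_le
  rw [le_div_iff₀ (by positivity)]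
  refine le_trans ?_ (fejerKernel_mul_sin_sq_le_one N x)
  have := fejerKernel_nonneg N x
  gcongr

end FejerKernel

section FejerMean

variable {T : ℝ} [Fact (0 < T)] {E : Type*} [NormedAddCommGroup E] [NormedSpace ℂ E]

/-- The `N`-th Fejér mean of the Fourier series of `f`: the average of its symmetric partial sums of
orders `0, …, N`, in which the `m`-th term therefore has weight `1 - |m| / (N + 1)`. -/
noncomputable def fejerMean (f : AddCircle T → E) (N : ℕ) (x : AddCircle T) : E :=
  ∑ m ∈ Icc (-N : ℤ) N, (((1 - |(m : ℝ)| / (N + 1) : ℝ) : ℂ) * fourier m x) • fourierCoeff f m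

lemma fejerMean_eq_integral {f : AddCircle T → E} (hf : Integrable f haarAddCircle) (N : ℕ)
    (x : AddCircle T) :
    fejerMean f N x = ∫ y, fejerKernel N (x - y) • f y ∂haarAddCircle := by
  have hkernel (y : AddCircle T) : fejerKernel N (x - y) • f y =
      ∑ m ∈ Icc (-N : ℤ) N,
        (((1 - |(m : ℝ)| / (N + 1) : ℝ) : ℂ) * fourier m x) • fourier (-m) y • f y := by
    simp only [← Complex.coe_smul, ofReal_fejerKernel, sum_smul, smul_smul, fourier_sub_apply,
      mul_assoc]
  have hint (m : ℤ) (c : ℂ) : Integrable (fun y => c • fourier (-m) y • f y) haarAddCircle :=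
    (hf.fourier_smul (-m)).smul c
  simp only [hkernel, integral_finsetSum _ fun m _ => hint m _, integral_smul, fejerMean,
    fourierCoeff]

lemma sub_fejerMean_eq_integral [CompleteSpace E] {f : AddCircle T → E}
    (hf : Integrable f haarAddCircle) (N : ℕ) (x : AddCircle T) (c : E) :
    c - fejerMean f N x = ∫ y, fejerKernel N (x - y) • (c - f y) ∂haarAddCircle := by
  have hcont := continuous_fejerKernel_sub N x
  obtain ⟨B, hB⟩ := isCompact_univ.exists_bound_of_continuousOn hcont.continuousOn
  have hKf : Integrable (fun y => fejerKernel N (x - y) • f y) haarAddCircle :=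
    hf.bdd_smul (𝕜 := ℝ) B hcont.aestronglyMeasurable (.of_forall fun y => hB y (Set.mem_univ y))
  simp only [smul_sub]
  rw [integral_sub ((integrable_fejerKernel_sub N x).smul_const c) hKf,
    ← fejerMean_eq_integral hf, integral_smul_const, integral_fejerKernel_sub, one_smul]

theorem fejer_approximation_error_bound_general [CompleteSpace E] {f : AddCircle T → E}
    (hf : AEStronglyMeasurable f haarAddCircle) (N : ℕ) {x : AddCircle T} {δ ε C : ℝ} (hδ : 0 < δ)
    (hε : ∀ y, ‖x - y‖ ≤ δ → ‖f x - f y‖ ≤ ε) (hC : ∀ y, ‖f x - f y‖ ≤ C) :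
    ‖f x - fejerMean f N x‖ ≤ ε + C / ((N + 1) * Real.sin (π * δ / T) ^ 2) := by
  set tail := C / ((N + 1) * Real.sin (π * δ / T) ^ 2) with htail
  have hε0 : 0 ≤ ε := (norm_nonneg _).trans (hε x (by simpa using hδ.le))
  have hC0 : 0 ≤ C := (norm_nonneg _).trans (hC x)
  have hbound (y : AddCircle T) :
      ‖fejerKernel N (x - y) • (f x - f y)‖ ≤ fejerKernel N (x - y) * ε + tail := by
    have hK := fejerKernel_nonneg N (x - y)
    rw [norm_smul, Real.norm_of_nonneg hK]
    rcases le_total ‖x - y‖ δ with hnear | hfar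
    · exact (mul_le_mul_of_nonneg_left (hε y hnear) hK).trans
        (le_add_of_nonneg_right (by positivity))
    · calc fejerKernel N (x - y) * ‖f x - f y‖
          ≤ 1 / ((N + 1) * Real.sin (π * δ / T) ^ 2) * C := by
            gcongr
            exacts [fejerKernel_le_of_le_norm N hδ hfar, hC y]
        _ = tail := by rw [htail, one_div_mul_eq_div]
        _ ≤ fejerKernel N (x - y) * ε + tail := le_add_of_nonneg_left (by positivity)
  have hf_int : Integrable f haarAddCircle :=
    .of_bound hf (‖f x‖ + C) <| .of_forall fun y =>
      (norm_le_norm_add_norm_sub (f x) (f y)).trans (by gcongr; exact hC y)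
  have hK_int := (integrable_fejerKernel_sub N x).mul_const ε
  calc ‖f x - fejerMean f N x‖
      = ‖∫ y, fejerKernel N (x - y) • (f x - f y) ∂haarAddCircle‖ := by
        rw [sub_fejerMean_eq_integral hf_int]
    _ ≤ ∫ y, (fejerKernel N (x - y) * ε + tail) ∂haarAddCircle :=
        norm_integral_le_of_norm_le (hK_int.add (integrable_const tail)) (.of_forall hbound)
    _ = ε + tail := by
        rw [integral_add hK_int (integrable_const tail), integral_mul_const,
          integral_fejerKernel_sub, one_mul, integral_const, probReal_univ, one_smul]

lemma norm_sub_fejerMean_periodic_lift_le [CompleteSpace E] {f : ℝ → E} {K : ℝ≥0}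
    (hper : Function.Periodic f T) (hf : LipschitzWith K f) (N : ℕ) {u δ C : ℝ} (hδ : 0 < δ)
    (hC : ∀ v, ‖f u - f v‖ ≤ C) :
    ‖f u - fejerMean hper.lift N u‖ ≤ K * δ + C / ((N + 1) * Real.sin (π * δ / T) ^ 2) := by
  have hlift := lipschitzWith_periodic_lift hf hper
  have hC_lift (y : AddCircle T) : ‖f u - hper.lift y‖ ≤ C := by
    obtain ⟨v, rfl⟩ := QuotientAddGroup.mk_surjective y
    exact hC v
  exact fejer_approximation_error_bound_general (x := (u : AddCircle T))
    hlift.continuous.aestronglyMeasurable N hδ (fun _ hy => hlift.norm_sub_le_of_le hy) hC_lift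

lemma fejerMean_periodic_lift {f : ℝ → ℂ} (hf : Function.Periodic f 1) (N : ℕ) (u : ℝ) :
    fejerMean hf.lift N (u : UnitAddCircle) =
      ∑ m ∈ Icc (-N : ℤ) N,
        (∫ t in (0 : ℝ)..1, f t * Complex.exp (-(2 * π * Complex.I * m * t))) *
          (1 - (|(m : ℝ)| / (N + 1) : ℝ)) * Complex.exp (2 * π * Complex.I * m * u) := by
  have hcoeff (m : ℤ) : fourierCoeff (T := 1) hf.lift m =
      ∫ t in (0 : ℝ)..1, f t * Complex.exp (-(2 * π * Complex.I * m * t)) := by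
    simp only [fourierCoeff_eq_intervalIntegral _ m 0, fourier_coe_apply, hf.lift_coe, zero_add,
      Complex.ofReal_one, Int.cast_neg, mul_neg, neg_mul, div_one, one_smul, smul_eq_mul,
      mul_comm (f _)]
  simp only [fejerMean, hcoeff, fourier_coe_apply, Complex.ofReal_one, div_one, smul_eq_mul,
    Complex.ofReal_sub]
  exact sum_congr rfl fun m _ => by ring

end FejerMean

theorem fejer_approximation_error_bound (θ : ℝ) (hθ : 0 < θ)
    (N : ℕ) (hN : 0 < N) (f : ℝ → ℝ)
    (hper : ∀ u : ℝ, f (u + 1) = f u)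
    (hlip : ∀ u v : ℝ, |f u - f v| ≤ |u - v| / θ)
    (hosc : ∀ u v : ℝ, |f u - f v| ≤ 1)
    (u δ : ℝ) (hδ : δ ∈ Set.Ioo (0 : ℝ) (1 / 2)) :
    ‖((f u : ℝ) : ℂ) -
        ∑ m ∈ Finset.Icc (-(N : ℤ)) (N : ℤ),
          (∫ t in (0 : ℝ)..1, ((f t : ℝ) : ℂ) *
              Complex.exp (-(2 * (Real.pi : ℂ) * Complex.I * (m : ℂ) * (t : ℂ)))) *
            (1 - (|(m : ℝ)| / ((N : ℝ) + 1) : ℝ)) *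
            Complex.exp (2 * (Real.pi : ℂ) * Complex.I * (m : ℂ) * (u : ℂ))‖ ≤
      δ / θ + 1 / ((N : ℝ) * Real.sin (Real.pi * δ) ^ 2) := by
  have hper_f : Function.Periodic (fun t => (f t : ℂ)) 1 := fun t => congrArg _ (hper t)
  have hlip_f : LipschitzWith ⟨1 / θ, by positivity⟩ fun t => (f t : ℂ) :=
    .of_dist_le_mul fun s t => by
      rw [Complex.isometry_ofReal.dist_eq]
      exact (hlip s t).trans_eq (one_div_mul_eq_div _ _).symm
  have hsin : 0 < Real.sin (π * δ) :=
    Real.sin_pos_of_pos_of_lt_pi (mul_pos Real.pi_pos hδ.1) (by nlinarith [hδ.2, Real.pi_pos])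
  have hbound := norm_sub_fejerMean_periodic_lift_le hper_f hlip_f N hδ.1 fun v => by
    simpa only [← Complex.ofReal_sub, Complex.norm_real, Real.norm_eq_abs] using hosc u v
  rw [fejerMean_periodic_lift, div_one] at hbound
  calc _ ≤ 1 / θ * δ + 1 / ((N + 1) * Real.sin (π * δ) ^ 2) := hbound
    _ ≤ δ / θ + 1 / (N * Real.sin (π * δ) ^ 2) := by
        rw [one_div_mul_eq_div]
        gcongr
        exact le_add_of_nonneg_right zero_le_one
end

section
/- Let 0 < θ < 1 and let ϱ_θ^−: ℝ → ℝ be the 1-periodic function defined on [0,1) by ϱ_θ^−(u) = ((1−θ)/θ)·u for 0 ≤ u < θ and ϱ_θ^−(u) = 1 − u for θ ≤ u < 1. Then for every nonzero integer m, the Fourier coefficient of ϱ_θ^− satisfies ∫₀¹ ϱ_θ^−(u)·e^{−2πimu} du = (1 − e^{−2πimθ}) / ((2πim)²·θ). -/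
/-!
STATEMENT 12: Fourier coefficients of the 1-periodic function ϱ_θ^−:
for 0 < θ < 1 and m ≠ 0,
∫₀¹ ϱ_θ^−(u)·e^{−2πimu} du = (1 − e^{−2πimθ}) / ((2πim)²·θ).
-/

/-- The 1-periodic function ϱ_θ^−, equal to ((1−θ)/θ)·u on [0,θ) and to 1−u on
[θ,1) (extended periodically via the fractional part). -/
noncomputable def vrhoMinus (θ u : ℝ) : ℝ :=
  if Int.fract u < θ then ((1 - θ) / θ) * Int.fract u else 1 - Int.fract u

/-!
On `[0, θ)` and on `[θ, 1)` the function `ϱ_θ^−` is affine, and an affine function times `e^{-cu}`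
has an elementary primitive, with a term in `1/c` carrying the value of the affine function and a
term in `1/c²` carrying its slope. Since `ϱ_θ^−` is continuous and vanishes at `0` and `1`, the
terms in `1/c` cancel. A jump `s` of the slope at `t` then contributes `s e^{-ct}/c²`: the jump at
`θ` is `-1/θ`, and for `c = 2πim` one has `e^{-c} = 1`, so the endpoints `0` and `1` together count
as a jump `1/θ` at `0`.
-/

theorem hasDerivAt_affine_mul_cexp {c : ℂ} (hc : c ≠ 0) (p q : ℂ) (u : ℝ) :
    HasDerivAt (fun u : ℝ ↦ -((p * u + q) / c + p / c ^ 2) * Complex.exp (-(c * u)))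
      ((p * u + q) * Complex.exp (-(c * u))) u := by
  have hu : HasDerivAt (fun u : ℝ ↦ (u : ℂ)) 1 u := Complex.ofRealCLM.hasDerivAt
  have haffine := ((((hu.const_mul p).add_const q).div_const c).add_const (p / c ^ 2)).fun_neg
  have hexp := (hu.const_mul c).fun_neg.cexp
  refine (haffine.mul hexp).congr_deriv ?_
  field_simp
  ring

theorem integral_affine_mul_cexp {c : ℂ} (hc : c ≠ 0) (p q : ℂ) (a b : ℝ) :
    ∫ u in a..b, (p * u + q) * Complex.exp (-(c * u)) =
      ((p * a + q) / c + p / c ^ 2) * Complex.exp (-(c * a)) -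
        ((p * b + q) / c + p / c ^ 2) * Complex.exp (-(c * b)) := by
  rw [intervalIntegral.integral_eq_sub_of_hasDerivAt
    (fun u _ ↦ hasDerivAt_affine_mul_cexp hc p q u)
    (Continuous.intervalIntegrable (by fun_prop) a b)]
  ring

theorem integral_eq_add_of_eqOn_uIoo {E : Type*} [NormedAddCommGroup E] [NormedSpace ℝ E]
    {μ : MeasureTheory.Measure ℝ} [MeasureTheory.NullSingletonClass μ] {f g h : ℝ → E} {a b c : ℝ}
    (hg : IntervalIntegrable g μ a b) (hh : IntervalIntegrable h μ b c)
    (hfg : Set.EqOn f g (Set.uIoo a b)) (hfh : Set.EqOn f h (Set.uIoo b c)) :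
    ∫ u in a..c, f u ∂μ = (∫ u in a..b, g u ∂μ) + ∫ u in b..c, h u ∂μ := by
  rw [← intervalIntegral.integral_add_adjacent_intervals (hg.congr_uIoo hfg.symm)
      (hh.congr_uIoo hfh.symm),
    intervalIntegral.integral_congr_uIoo hfg, intervalIntegral.integral_congr_uIoo hfh]

theorem vrhoMinus_of_mem_Ico_left {θ u : ℝ} (hθ : θ ≤ 1) (hu : u ∈ Set.Ico 0 θ) :
    vrhoMinus θ u = (1 - θ) / θ * u := by
  have hfract : Int.fract u = u := Int.fract_eq_self.mpr ⟨hu.1, hu.2.trans_le hθ⟩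
  rw [vrhoMinus, hfract, if_pos hu.2]

theorem vrhoMinus_of_mem_Ico_right {θ u : ℝ} (hθ : 0 ≤ θ) (hu : u ∈ Set.Ico θ 1) :
    vrhoMinus θ u = 1 - u := by
  have hfract : Int.fract u = u := Int.fract_eq_self.mpr ⟨hθ.trans hu.1, hu.2⟩
  rw [vrhoMinus, hfract, if_neg hu.1.not_gt]

theorem integral_vrhoMinus_mul_cexp {θ : ℝ} (hθ0 : 0 < θ) (hθ1 : θ ≤ 1) {c : ℂ} (hc : c ≠ 0) :
    ∫ u in (0 : ℝ)..1, (vrhoMinus θ u : ℂ) * Complex.exp (-(c * u)) =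
      (1 - θ + θ * Complex.exp (-c) - Complex.exp (-(c * θ))) / (c ^ 2 * θ) := by
  have hθ : (θ : ℂ) ≠ 0 := Complex.ofReal_ne_zero.mpr hθ0.ne'
  have hleft : Set.EqOn (fun u : ℝ ↦ (vrhoMinus θ u : ℂ) * Complex.exp (-(c * u)))
      (fun u : ℝ ↦ ((1 - θ) / θ * u + 0) * Complex.exp (-(c * u))) (Set.uIoo 0 θ) := by
    intro u hu
    rw [Set.uIoo_of_le hθ0.le] at hu
    simp [vrhoMinus_of_mem_Ico_left hθ1 (Set.Ioo_subset_Ico_self hu)]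
  have hright : Set.EqOn (fun u : ℝ ↦ (vrhoMinus θ u : ℂ) * Complex.exp (-(c * u)))
      (fun u : ℝ ↦ (-1 * u + 1) * Complex.exp (-(c * u))) (Set.uIoo θ 1) := by
    intro u hu
    rw [Set.uIoo_of_le hθ1] at hu
    simp [vrhoMinus_of_mem_Ico_right hθ0.le (Set.Ioo_subset_Ico_self hu), neg_add_eq_sub]
  rw [integral_eq_add_of_eqOn_uIoo (Continuous.intervalIntegrable (by fun_prop) 0 θ)
      (Continuous.intervalIntegrable (by fun_prop) θ 1) hleft hright,
    integral_affine_mul_cexp hc, integral_affine_mul_cexp hc]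
  simp only [Complex.ofReal_zero, Complex.ofReal_one, mul_zero, mul_one, neg_zero,
    Complex.exp_zero]
  field_simp
  ring

theorem fourier_coefficients_vrhoMinus (θ : ℝ) (hθ0 : 0 < θ) (hθ1 : θ < 1)
    (m : ℤ) (hm : m ≠ 0) :
    ∫ u in (0 : ℝ)..1, ((vrhoMinus θ u : ℝ) : ℂ) *
        Complex.exp (-(2 * (Real.pi : ℂ) * Complex.I * (m : ℂ) * (u : ℂ))) =
      (1 - Complex.exp (-(2 * (Real.pi : ℂ) * Complex.I * (m : ℂ) * (θ : ℂ)))) /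
        ((2 * (Real.pi : ℂ) * Complex.I * (m : ℂ)) ^ 2 * (θ : ℂ)) := by
  have hc : 2 * (Real.pi : ℂ) * Complex.I * (m : ℂ) ≠ 0 :=
    mul_ne_zero Complex.two_pi_I_ne_zero (Int.cast_ne_zero.mpr hm)
  have hexp : Complex.exp (-(2 * (Real.pi : ℂ) * Complex.I * (m : ℂ))) = 1 :=
    Complex.exp_eq_one_iff.mpr ⟨-m, by push_cast; ring⟩
  rw [integral_vrhoMinus_mul_cexp hθ0 hθ1.le hc, hexp, mul_one, sub_add_cancel]
end

section
/- Let the r×r stochastic transition matrix P = {p(j|k)} be irreducible with period d. If for some integer m the matrix A_m has an eigenvalue λ with |λ| = 1, then for every t ∈ {0, 1, …, d−1}, the number λ·e^{2πit/d} is also an eigenvalue of A_m. -/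
/-!
Let `ω ^ d = 1`, where `d` divides the length of every closed walk along nonzero entries of a square
matrix `A`. In the Leibniz expansion of `det (X - ω A)`, the term of a permutation `σ` either
vanishes or its nontrivial cycles are closed walks of `A`; then `d` divides the number of points
moved by `σ`, and the powers of `ω` cancel. Hence `ω A` and `A` have the same characteristic
polynomial, so the spectrum of `A` is invariant under multiplication by `ω`.
-/

open Polynomial Equiv.Perm

section ClosedWalks

variable {n : Type*}

/-- The number `d` is a common divisor of the lengths of all closed walks in the directed graph
with edge relation `E`; it takes the role of the period of a chain. A walk of length `l` is encoded
as the values at `0, …, l` of a sequence `x`, whose other values are irrelevant. -/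
def DvdClosedWalkLengths (E : n → n → Prop) (d : ℕ) : Prop :=
  ∀ (x : ℕ → n) (l : ℕ), x l = x 0 → (∀ k < l, E (x k) (x (k + 1))) → d ∣ l

theorem DvdClosedWalkLengths.dvd_one_of_loop {E : n → n → Prop} {d : ℕ}
    (hd : DvdClosedWalkLengths E d) {i : n} (hi : E i i) : d ∣ 1 :=
  hd (fun _ ↦ i) 1 rfl fun _ _ ↦ hi

variable [Fintype n] [DecidableEq n]

theorem pow_card_support_cycleOf_apply_self (σ : Equiv.Perm n) (i : n) :
    (σ ^ (σ.cycleOf i).support.card) i = i := by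
  rw [← pow_mod_card_support_cycleOf_self_apply, Nat.mod_self, pow_zero, one_apply]

theorem dvd_card_support_of_dvd_card_support_cycleOf {σ : Equiv.Perm n} {d : ℕ}
    (h : ∀ i ∈ σ.support, d ∣ (σ.cycleOf i).support.card) : d ∣ σ.support.card := by
  rw [← sum_cycleType, cycleType_def]
  refine Multiset.dvd_sum fun l hl ↦ ?_
  obtain ⟨c, hc, rfl⟩ := Multiset.mem_map.1 hl
  have hc : c ∈ σ.cycleFactorsFinset := hc
  obtain ⟨i, hi⟩ := (mem_cycleFactorsFinset_iff.1 hc).1.nonempty_support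
  rw [Function.comp_apply, cycle_is_cycleOf hi hc]
  exact h i (mem_cycleFactorsFinset_support_le hc hi)

theorem DvdClosedWalkLengths.dvd_card_support {E : n → n → Prop} {d : ℕ}
    (hd : DvdClosedWalkLengths E d) {σ : Equiv.Perm n} (hσ : ∀ i ∈ σ.support, E i (σ i)) :
    d ∣ σ.support.card := by
  refine dvd_card_support_of_dvd_card_support_cycleOf fun i hi ↦
    hd (fun k ↦ (σ ^ k) i) _ (pow_card_support_cycleOf_apply_self σ i) fun k _ ↦ ?_
  simpa only [pow_succ', mul_apply] using hσ _ (pow_apply_mem_support.2 hi)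

theorem pow_apply_pos_of_walk {R : Type*} [Semiring R] [PartialOrder R] [IsStrictOrderedRing R]
    {A : Matrix n n R} (hA : ∀ i j, 0 ≤ A i j) {x : ℕ → n} {l : ℕ}
    (hx : ∀ k < l, 0 < A (x k) (x (k + 1))) : 0 < (A ^ l) (x 0) (x l) := by
  induction l with
  | zero => simp
  | succ l ih =>
    rw [pow_succ, Matrix.mul_apply]
    exact Finset.sum_pos'
      (fun i _ ↦ mul_nonneg (Matrix.pow_apply_nonneg hA l _ i) (hA i _))
      ⟨x l, Finset.mem_univ _, mul_pos (ih fun k hk ↦ hx k (hk.trans l.lt_succ_self))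
        (hx l l.lt_succ_self)⟩

theorem dvdClosedWalkLengths_of_pow_apply_pos {R : Type*} [Semiring R] [PartialOrder R]
    [IsStrictOrderedRing R] {A : Matrix n n R} (hA : ∀ i j, 0 ≤ A i j) {d : ℕ}
    (hd : ∀ i l, 0 < l → 0 < (A ^ l) i i → d ∣ l) :
    DvdClosedWalkLengths (fun i j ↦ 0 < A i j) d := by
  intro x l hclosed hx
  rcases l.eq_zero_or_pos with rfl | hl
  · exact dvd_zero d
  · have hpos := pow_apply_pos_of_walk hA hx
    rw [hclosed] at hpos
    exact hd (x 0) l hl hpos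

end ClosedWalks

theorem pow_eq_one_of_dvd_of_pow_eq_one {M : Type*} [Monoid M] {a : M} {d l : ℕ} (hdl : d ∣ l)
    (ha : a ^ d = 1) : a ^ l = 1 :=
  orderOf_dvd_iff_pow_eq_one.1 ((orderOf_dvd_of_pow_eq_one ha).trans hdl)

section Charpoly

variable {n R : Type*} [Fintype n] [DecidableEq n] [CommRing R]
  {A : Matrix n n R} {d : ℕ} {ω : R}

theorem charmatrix_smul_apply (hd : DvdClosedWalkLengths (fun i j ↦ A i j ≠ 0) d) (hω : ω ^ d = 1)
    (i j : n) :
    (ω • A).charmatrix i j = (if i = j then 1 else C ω) * A.charmatrix i j := by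
  rcases eq_or_ne i j with rfl | hij
  · have hloop : ω * A i i = A i i := by
      by_cases hi : A i i = 0
      · rw [hi, mul_zero]
      · rw [← pow_one ω, pow_eq_one_of_dvd_of_pow_eq_one (hd.dvd_one_of_loop hi) hω, one_mul]
    simp [hloop]
  · simp [hij]

theorem prod_charmatrix_smul (hd : DvdClosedWalkLengths (fun i j ↦ A i j ≠ 0) d) (hω : ω ^ d = 1)
    (σ : Equiv.Perm n) :
    ∏ i, (ω • A).charmatrix i (σ i) = ∏ i, A.charmatrix i (σ i) := by
  have hfactor : ∏ i, (ω • A).charmatrix i (σ i) =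
      C ω ^ σ.support.card * ∏ i, A.charmatrix i (σ i) := by
    simp only [charmatrix_smul_apply hd hω, Finset.prod_mul_distrib, Finset.prod_ite,
      Finset.prod_const_one, Finset.prod_const, one_mul, Equiv.Perm.support, eq_comm, ne_eq]
  by_cases hσ : ∀ i ∈ σ.support, A i (σ i) ≠ 0
  · rw [hfactor, ← C_pow, pow_eq_one_of_dvd_of_pow_eq_one (hd.dvd_card_support hσ) hω, C_1, one_mul]
  · push Not at hσ
    obtain ⟨i, hi, hAi⟩ := hσ
    have hzero : A.charmatrix i (σ i) = 0 := by
      rw [Matrix.charmatrix_apply_ne _ _ _ (mem_support.1 hi).symm, hAi, C_0, neg_zero]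
    rw [hfactor, Finset.prod_eq_zero (Finset.mem_univ i) hzero, mul_zero]

theorem charpoly_smul_eq_charpoly (hd : DvdClosedWalkLengths (fun i j ↦ A i j ≠ 0) d)
    (hω : ω ^ d = 1) : (ω • A).charpoly = A.charpoly := by
  simp only [Matrix.charpoly]
  rw [← Matrix.det_transpose, ← Matrix.det_transpose A.charmatrix]
  simp only [Matrix.det_apply, Matrix.transpose_apply, prod_charmatrix_smul hd hω]

theorem isRoot_charpoly_iff_exists_mulVec_eq_smul [IsDomain R] {μ : R} :
    A.charpoly.IsRoot μ ↔ ∃ v, v ≠ 0 ∧ A.mulVec v = μ • v := by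
  rw [IsRoot.def, Matrix.eval_charpoly, ← Matrix.exists_mulVec_eq_zero_iff]
  simp only [Matrix.sub_mulVec, Matrix.scalar_apply, ← Matrix.smul_one_eq_diagonal,
    Matrix.smul_mulVec, Matrix.one_mulVec, sub_eq_zero, eq_comm]

omit [DecidableEq n] in
theorem exists_mulVec_eq_mul_smul_of_pow_eq_one [IsDomain R]
    (hd : DvdClosedWalkLengths (fun i j ↦ A i j ≠ 0) d) (hω : ω ^ d = 1) {μ : R}
    (hμ : ∃ v, v ≠ 0 ∧ A.mulVec v = μ • v) :
    ∃ v, v ≠ 0 ∧ A.mulVec v = (μ * ω) • v := by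
  classical
  obtain ⟨v, hv0, hv⟩ := hμ
  have hsmul : (ω • A).mulVec v = (μ * ω) • v := by
    rw [Matrix.smul_mulVec, hv, smul_smul, mul_comm]
  rw [← isRoot_charpoly_iff_exists_mulVec_eq_smul, ← charpoly_smul_eq_charpoly hd hω,
    isRoot_charpoly_iff_exists_mulVec_eq_smul]
  exact ⟨v, hv0, hsmul⟩

end Charpoly

theorem Amat_apply_ne_zero_iff {r : ℕ} {p : Fin r → Fin r → ℝ} {m : ℤ} {j k : Fin r} :
    Amat p m j k ≠ 0 ↔ 0 < p k j := by
  rw [Amat, Matrix.of_apply, ite_ne_right_iff, and_iff_left_iff_imp]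
  exact fun h ↦ mul_ne_zero (Complex.ofReal_ne_zero.2 h.ne') (Complex.exp_ne_zero _)

theorem exp_two_pi_mul_I_mul_div_pow {d : ℕ} (hd : d ≠ 0) (t : ℕ) :
    Complex.exp (2 * (Real.pi : ℂ) * Complex.I * (t : ℂ) / (d : ℂ)) ^ d = 1 := by
  rw [← Complex.exp_nat_mul, mul_div_cancel₀ _ (Nat.cast_ne_zero.2 hd), mul_comm]
  exact Complex.exp_nat_mul_two_pi_mul_I t

theorem periodic_chain_eigenvalue_rotations_general {r : ℕ} {p : Fin r → Fin r → ℝ}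
    (hpnn : ∀ j k, 0 ≤ p j k) {d : ℕ}
    (hddvd : ∀ (j : Fin r) (n : ℕ), 0 < n → 0 < (Pmat p ^ n) j j → d ∣ n)
    (m : ℤ) {ω : ℂ} (hω : ω ^ d = 1) {lam : ℂ}
    (heig : ∃ v : Fin r → ℂ, v ≠ 0 ∧ (Amat p m).mulVec v = lam • v) :
    ∃ v : Fin r → ℂ, v ≠ 0 ∧ (Amat p m).mulVec v = (lam * ω) • v := by
  have hwalk : DvdClosedWalkLengths (fun j k ↦ 0 < (Pmat p).transpose j k) d :=
    dvdClosedWalkLengths_of_pow_apply_pos (A := (Pmat p).transpose) (fun j k ↦ hpnn k j)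
      fun j n hn hpos ↦ hddvd j n hn (by rwa [← Matrix.transpose_pow] at hpos)
  have hsupport : DvdClosedWalkLengths (fun j k ↦ Amat p m j k ≠ 0) d := by
    simpa only [Amat_apply_ne_zero_iff] using! hwalk
  exact exists_mulVec_eq_mul_smul_of_pow_eq_one hsupport hω heig

theorem periodic_chain_eigenvalue_rotations (r : ℕ)
    (p : Fin (r + 2) → Fin (r + 2) → ℝ)
    (hpnn : ∀ j k, 0 ≤ p j k) (hpsum : ∀ k, ∑ j, p j k = 1)
    (hirred : ∀ j k : Fin (r + 2), ∃ l : ℕ, 0 < l ∧ 0 < (Pmat p ^ l) j k)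
    (d : ℕ) (hd : 0 < d)
    (hddvd : ∀ (j : Fin (r + 2)) (n : ℕ), 0 < n → 0 < (Pmat p ^ n) j j → d ∣ n)
    (hdgcd : ∀ e : ℕ, (∀ (j : Fin (r + 2)) (n : ℕ), 0 < n →
      0 < (Pmat p ^ n) j j → e ∣ n) → e ∣ d)
    (m : ℤ) (lam : ℂ) (hlam : ‖lam‖ = 1)
    (heig : ∃ v : Fin (r + 2) → ℂ, v ≠ 0 ∧ (Amat p m).mulVec v = lam • v) :
    ∀ t : ℕ, t < d →
      ∃ v : Fin (r + 2) → ℂ, v ≠ 0 ∧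
        (Amat p m).mulVec v =
          (lam * Complex.exp (2 * (Real.pi : ℂ) * Complex.I * (t : ℂ) / (d : ℂ))) • v :=
  fun t _ ↦ periodic_chain_eigenvalue_rotations_general hpnn hddvd m
    (exp_two_pi_mul_I_mul_div_pow hd.ne' t) heig
end
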